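/- arXiv:1503.08057 — 2 statements merged into one kernel-verified Lean document; each statement's English description precedes it below -/
import Mathlib

section
/- There exists a constant c such that every simple graph G containing no triangle and no induced cycle of even length at least 6 satisfies χ(G) < c. -/
/-!
Call `G` good if it has no triangle and no induced even cycle of length at least `6`, and suppose
that all sets `N2 G v` of vertices reached from `v` in two steps have chromatic number at most `τ`.
The main step bounds `χ(G)` by a function of `τ` (`Good.colS_univ`).

If `χ(G)` is huge, so is the chromatic number of some level of a breadth-first search from a
vertex `v`. In a connected set of large chromatic number one finds a *parity switch*: two induced
paths of different parity between fixed ends `x` and `y`, followed by a connected set attached only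
at `y` that still has large chromatic number (`Good.exists_switch`). Three switches are chained
inside one component of the level, ending in a set `L`. Let `A` be the set of parents of vertices
of `L` in the preceding level. A vertex of `A` has neighbors below (its own parent) and beyond each
switch (in `L`), so it has a neighbor in each switch, as otherwise one of the two parities closes
an even hole (`Good.hits_switch`). The lower levels, the first switch and the third switch are thus
three connected, pairwise anticomplete sets in each of which every vertex of `A` has a neighbor.

For nonadjacent `a, b ∈ A`, two of the three induced paths joining `a` and `b` through these sets
have equal parity; the cycle they form must have length four, so `a` and `b` have common neighbors
in two of the three sets (`Good.two_of_three`). It follows that `A` induces no `2K₂`, hence is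
`3`-colorable (`Good.colS_three`), and that each color class, being stable with pairwise common
neighbors, has a common neighbor (`Good.helly`, since there is no induced `C₆`). So `L`, dominated
by `A`, lies in the union of three sets `N2 G u`, whence `χ(L) ≤ 3τ` (`Good.colS_of_layers`).

The main step is applied twice. If `G` has no `5`-cycle, every `N2 G v` is stable and `τ = 1`
works. For general good `G`, excluding `C₆` shows that `N2 G v` contains no `5`-cycle
(`Good.no_C5_N2`), so the first case applied to the subgraph induced by `N2 G v` yields a constant
`τ` valid for all `v`.
-/

open SimpleGraph

/-- The chromatic number of `G`, as a natural number. -/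
noncomputable def chi {V : Type} (G : SimpleGraph V) : ℕ := G.chromaticNumber.toNat

/-- The chromatic number of the subgraph of `G` induced by the vertex set `A`. -/
noncomputable def chiSet {V : Type} (G : SimpleGraph V) (A : Set V) : ℕ :=
  (G.induce A).chromaticNumber.toNat

/-- `G` contains no induced cycle of length `n`: there is no graph embedding
(induced-subgraph embedding) of the `n`-cycle into `G`. -/
def NoInducedCycle {V : Type} (G : SimpleGraph V) (n : ℕ) : Prop :=
  IsEmpty (cycleGraph n ↪g G)

/-- The `k`-th level of the `v`-levelling: vertices at distance exactly `k` from `v`. -/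
def level {V : Type} (G : SimpleGraph V) (v : V) (k : ℕ) : Set V :=
  {x | G.Reachable v x ∧ G.dist v x = k}

/-- `N(S)`: the set of vertices adjacent to at least one vertex of `S`. -/
def neighborsOf {V : Type} (G : SimpleGraph V) (S : Set V) : Set V :=
  {x | ∃ s ∈ S, G.Adj s x}

/-- A walk is an induced path: it is a path, and its vertex set induces
no edges other than the path edges. -/
def IsInducedPathW {V : Type} {G : SimpleGraph V} {u w : V} (p : G.Walk u w) : Prop :=
  p.IsPath ∧ ∀ a ∈ p.support, ∀ b ∈ p.support, G.Adj a b → s(a, b) ∈ p.edges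

/-- A Parity Changing Path (PCP) of order `ℓ` in `G`: regular blocks `block 0, …, block (ℓ-1)`
(vertex sets of induced subgraphs), a last block `lastBlock`, induced paths `path i` of
length at least `2` from `y i ∈ block i` to `x i.succ`, with the prescribed shared vertices,
disjointness and edge conditions, an induced odd and an induced even `x i`–`y i` path inside
each regular block, `lastBlock` connected and each regular block `4`-colorable. -/
structure PCP {V : Type} (G : SimpleGraph V) (ℓ : ℕ) where
  block : Fin ℓ → Set V
  lastBlock : Set V
  x : Fin (ℓ + 1) → V
  y : Fin ℓ → V
  path : (i : Fin ℓ) → G.Walk (y i) (x i.succ)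
  x_mem : ∀ i : Fin ℓ, x i.castSucc ∈ block i
  y_mem : ∀ i : Fin ℓ, y i ∈ block i
  xlast_mem : x (Fin.last ℓ) ∈ lastBlock
  path_induced : ∀ i, IsInducedPathW (path i)
  path_length : ∀ i, 2 ≤ (path i).length
  blocks_disjoint : ∀ i j, i ≠ j → Disjoint (block i) (block j)
  block_last_disjoint : ∀ i, Disjoint (block i) lastBlock
  block_path_inter : ∀ i j : Fin ℓ, ∀ w ∈ block i, w ∈ (path j).support →
      (j = i ∧ w = y i) ∨ ((j : ℕ) + 1 = (i : ℕ) ∧ w = x i.castSucc)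
  last_path_inter : ∀ j : Fin ℓ, ∀ w ∈ lastBlock, w ∈ (path j).support →
      (j : ℕ) + 1 = ℓ ∧ w = x (Fin.last ℓ)
  paths_disjoint : ∀ i j : Fin ℓ, i ≠ j → ∀ w,
      w ∈ (path i).support → w ∈ (path j).support → False
  edges_within : ∀ a b : V,
      a ∈ (⋃ i, block i) ∪ lastBlock ∪ (⋃ i, {w | w ∈ (path i).support}) →
      b ∈ (⋃ i, block i) ∪ lastBlock ∪ (⋃ i, {w | w ∈ (path i).support}) →
      G.Adj a b →
      (∃ i, a ∈ block i ∧ b ∈ block i) ∨ (a ∈ lastBlock ∧ b ∈ lastBlock) ∨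
        (∃ i, a ∈ (path i).support ∧ b ∈ (path i).support)
  odd_path : ∀ i : Fin ℓ, ∃ p : G.Walk (x i.castSucc) (y i),
      IsInducedPathW p ∧ (∀ w ∈ p.support, w ∈ block i) ∧ Odd p.length
  even_path : ∀ i : Fin ℓ, ∃ p : G.Walk (x i.castSucc) (y i),
      IsInducedPathW p ∧ (∀ w ∈ p.support, w ∈ block i) ∧ Even p.length
  last_connected : (G.induce lastBlock).Connected
  block_chrom : ∀ i, (G.induce (block i)).chromaticNumber ≤ 4

/-- The origin of a PCP. -/
def PCP.origin {V : Type} {G : SimpleGraph V} {ℓ : ℕ} (P : PCP G ℓ) : V := P.x 0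

/-- The vertex set of a PCP. -/
def PCP.support {V : Type} {G : SimpleGraph V} {ℓ : ℕ} (P : PCP G ℓ) : Set V :=
  (⋃ i, P.block i) ∪ P.lastBlock ∪ (⋃ i, {w | w ∈ (P.path i).support})

/-- The leftovers of a PCP: the chromatic number of its last block. -/
noncomputable def PCP.leftovers {V : Type} {G : SimpleGraph V} {ℓ : ℕ} (P : PCP G ℓ) : ℕ :=
  chiSet G P.lastBlock

/-- A strong PCP: every regular block contains an induced 5-cycle. -/
def PCP.IsStrong {V : Type} {G : SimpleGraph V} {ℓ : ℕ} (P : PCP G ℓ) : Prop :=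
  ∀ i : Fin ℓ, ∃ f : cycleGraph 5 ↪g G, ∀ t, f t ∈ P.block i

/-- A PCP lies in the level `N_k` of the `v`-levelling and is rooted there: some vertex
`u' ∈ N_{k-1}` is adjacent to the origin and to no other vertex of the PCP. -/
def PCP.IsRootedInLevel {V : Type} {G : SimpleGraph V} {ℓ : ℕ} (P : PCP G ℓ)
    (v : V) (k : ℕ) : Prop :=
  P.support ⊆ level G v k ∧
    ∃ u' ∈ level G v (k - 1), G.Adj u' P.origin ∧
      ∀ w ∈ P.support, w ≠ P.origin → ¬ G.Adj u' w

namespace EvenHole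

/-- The class under consideration: no triangle and no induced even cycle of length at least `6`. -/
structure Good {V : Type} (G : SimpleGraph V) : Prop where
  tri : ∀ a b c, G.Adj a b → G.Adj b c → G.Adj a c → False
  hole : ∀ n : ℕ, 6 ≤ n → Even n → NoInducedCycle G n

/-- `G[X]` is `n`-colorable; the coloring is a function on all of `V` whose values outside `X`
are irrelevant. -/
def ColS {V : Type} (G : SimpleGraph V) (X : Set V) (n : ℕ) : Prop :=
  ∃ f : V → ℕ, ∀ a ∈ X, f a < n ∧ ∀ b ∈ X, G.Adj a b → f a ≠ f b

/-- `C` induces a connected (or empty) subgraph, expressed by the absence of a nontrivial cut: a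
property that holds somewhere in `C` and propagates along the edges inside `C` holds on all
of `C`. -/
def Conn {V : Type} (G : SimpleGraph V) (C : Set V) : Prop :=
  ∀ P : V → Prop, (∃ a ∈ C, P a) → (∀ u ∈ C, ∀ w ∈ C, G.Adj u w → P u → P w) → ∀ b ∈ C, P b

/-- `IP G x y l`: the list `l` enumerates the vertices of an induced path of `G` from `x`
to `y`. -/
inductive IP {V : Type} (G : SimpleGraph V) : V → V → List V → Prop
  | single (x : V) : IP G x x [x]
  | cons {a x y : V} {l : List V} : G.Adj a x → (∀ c ∈ l, c = x ∨ (c ≠ a ∧ ¬ G.Adj a c)) →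
      IP G x y l → IP G a y (a :: l)

/-- The vertices joined to `v` by a walk of length two, including `v` itself. -/
def N2 {V : Type} (G : SimpleGraph V) (v : V) : Set V := {z | ∃ a, G.Adj v a ∧ G.Adj a z}

/-- `d` is the distance from `x` inside the connected set `H`, described by the properties of
breadth-first levels. -/
structure Levelling {V : Type} (G : SimpleGraph V) (H : Set V) (x : V) (d : V → ℕ) : Prop where
  root : d x = 0
  zero : ∀ z ∈ H, d z = 0 → z = x
  parent : ∀ z ∈ H, ∀ n, d z = n + 1 → ∃ p ∈ H, G.Adj p z ∧ d p = n
  step : ∀ a ∈ H, ∀ b ∈ H, G.Adj a b → d b ≤ d a + 1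

variable {V : Type} {G : SimpleGraph V}

/-! ### Colorings of vertex sets -/

lemma ColS.mono {X Y : Set V} {m n : ℕ} (h : ColS G Y m) (hXY : X ⊆ Y) (hmn : m ≤ n) :
    ColS G X n := by
  obtain ⟨f, hf⟩ := h
  exact ⟨f, fun a ha => ⟨(hf a (hXY ha)).1.trans_le hmn, fun b hb => (hf a (hXY ha)).2 b (hXY hb)⟩⟩

lemma ColS.union {X Y : Set V} {m n : ℕ} (hX : ColS G X m) (hY : ColS G Y n) :
    ColS G (X ∪ Y) (m + n) := by
  classical
  obtain ⟨f, hf⟩ := hX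
  obtain ⟨g, hg⟩ := hY
  refine ⟨fun a => if a ∈ X then f a else m + g a, fun a ha => ⟨?_, fun b hb hab => ?_⟩⟩
  · by_cases h : a ∈ X
    · simp only [h, if_true]; have := (hf a h).1; omega
    · have := (hg a (ha.resolve_left h)).1
      simp only [h, if_false]; omega
  · by_cases h : a ∈ X <;> by_cases h' : b ∈ X <;> simp only [h, h', if_true, if_false]
    · exact (hf a h).2 b h' hab
    · have := (hf a h).1; omega
    · have := (hf b h').1; omega
    · have := (hg a (ha.resolve_left h)).2 b (hb.resolve_left h') hab
      omega

lemma ColS.of_stable {X : Set V} (h : ∀ a ∈ X, ∀ b ∈ X, ¬ G.Adj a b) : ColS G X 1 :=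
  ⟨fun _ => 0, fun a ha => ⟨Nat.one_pos, fun b hb hab => (h a ha b hb hab).elim⟩⟩

lemma ColS.nonempty_of_not {X : Set V} {n : ℕ} (h : ¬ ColS G X n) : X.Nonempty := by
  by_contra hX
  exact h ⟨fun _ => 0, fun a ha => (hX ⟨a, ha⟩).elim⟩

lemma not_colS_diff {X Z : Set V} {m n : ℕ} (h : ¬ ColS G X (n + m)) (hZ : ColS G Z m) :
    ¬ ColS G (X \ Z) n := by
  intro h'
  exact h ((h'.union hZ).mono (by intro a ha; by_cases h : a ∈ Z <;> simp [h, ha]) le_rfl)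

lemma Good.colS_nbr (hG : Good G) (v : V) : ColS G {z | G.Adj v z} 1 :=
  ColS.of_stable fun a ha b hb hab => hG.tri v a b ha hab hb

/-- Some component of `G[X]` needs as many colors as `G[X]` itself. -/
lemma exists_component {X : Set V} {n : ℕ} (h : ¬ ColS G X n) :
    ∃ K ⊆ X, Conn G K ∧ (∀ a ∈ K, ∀ b ∈ X, G.Adj a b → b ∈ K) ∧ ¬ ColS G K n := by
  classical
  by_contra hcon
  push Not at hcon
  let R : V → V → Prop := fun a b => a ∈ X ∧ b ∈ X ∧ G.Adj a b
  have : Std.Symm R := ⟨fun a b hab => ⟨hab.2.1, hab.1, hab.2.2.symm⟩⟩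
  have hsymm : ∀ {a b}, Relation.ReflTransGen R a b → Relation.ReflTransGen R b a :=
    fun h => Std.Symm.symm _ _ h
  let K : V → Set V := fun z => {b | Relation.ReflTransGen R z b}
  have hKX : ∀ z ∈ X, K z ⊆ X := by
    intro z hz b hb
    induction hb with
    | refl => exact hz
    | tail _ h2 _ => exact h2.2.1
  have hK : ∀ z ∈ X, ColS G (K z) n := by
    intro z hz
    refine hcon (K z) (hKX z hz) ?_ ?_
    · rintro P ⟨a, ha, hPa⟩ hP b hb
      have hab : Relation.ReflTransGen R a b := (hsymm ha).trans hb
      have key : b ∈ K z ∧ P b := by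
        induction hab with
        | refl => exact ⟨ha, hPa⟩
        | tail h1 h2 ih =>
          have hu := ha.trans h1
          exact ⟨hb, hP _ hu _ hb h2.2.2 (ih hu).2⟩
      exact key.2
    · intro a ha b hb hab
      exact Relation.ReflTransGen.tail ha ⟨hKX z hz ha, hb, hab⟩
  have hF : ∀ S : Set V, ∃ f : V → ℕ, ColS G S n →
      ∀ a ∈ S, f a < n ∧ ∀ b ∈ S, G.Adj a b → f a ≠ f b := by
    intro S
    by_cases hS : ColS G S n
    · obtain ⟨f, hf⟩ := hS
      exact ⟨f, fun _ => hf⟩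
    · exact ⟨fun _ => 0, fun h => (hS h).elim⟩
  choose F hF using hF
  refine h ⟨fun z => F (K z) z, fun a ha => ?_⟩
  obtain ⟨h1, h2⟩ := hF (K a) (hK a ha) a Relation.ReflTransGen.refl
  refine ⟨h1, fun b hb hab => ?_⟩
  have hRab : R a b := ⟨ha, hb, hab⟩
  have hKK : K a = K b := by
    ext c
    exact ⟨fun hc => (hsymm (.single hRab)).trans hc, fun hc => (Relation.ReflTransGen.single hRab).trans hc⟩
  have := h2 b (.single hRab) hab
  simpa only [hKK] using this

/-! ### Connected sets and levellings -/

/-- If `K` is a component of `G[C \ Z]`, where `C` is connected and meets `Z`, then some vertex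
of `C ∩ Z` has a neighbor in `K`. -/
lemma Conn.attach {C Z K : Set V} (hC : Conn G C) (hK : K ⊆ C \ Z) (hne : K.Nonempty)
    (hcl : ∀ a ∈ K, ∀ b ∈ C \ Z, G.Adj a b → b ∈ K) {h : V} (hhC : h ∈ C) (hhZ : h ∈ Z) :
    ∃ w ∈ C, w ∈ Z ∧ ∃ u ∈ K, G.Adj w u := by
  by_contra hcon
  push Not at hcon
  obtain ⟨k, hk⟩ := hne
  refine (hK (hC (· ∈ K) ⟨k, (hK hk).1, hk⟩ ?_ h hhC)).2 hhZ
  intro u _ w hw huw hu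
  by_cases hwZ : w ∈ Z
  · exact (hcon w hw hwZ u hu huw.symm).elim
  · exact hcl u hu w ⟨hw, hwZ⟩ huw

lemma Conn.union {A B : Set V} (hA : Conn G A) (hB : Conn G B) {z : V} (hzA : z ∈ A)
    (hzB : z ∈ B) : Conn G (A ∪ B) := by
  rintro P ⟨a, ha, hPa⟩ hP b hb
  have h1 : ∀ u ∈ A, ∀ w ∈ A, G.Adj u w → P u → P w := fun u hu w hw =>
    hP u (Or.inl hu) w (Or.inl hw)
  have h2 : ∀ u ∈ B, ∀ w ∈ B, G.Adj u w → P u → P w := fun u hu w hw =>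
    hP u (Or.inr hu) w (Or.inr hw)
  have hz : P z := by
    rcases ha with ha | ha
    · exact hA P ⟨a, ha, hPa⟩ h1 z hzA
    · exact hB P ⟨a, ha, hPa⟩ h2 z hzB
  rcases hb with hb | hb
  · exact hA P ⟨z, hzA, hz⟩ h1 b hb
  · exact hB P ⟨z, hzB, hz⟩ h2 b hb

lemma Conn.insert {C : Set V} (hC : Conn G C) {x u : V} (hu : u ∈ C) (hxu : G.Adj x u) :
    Conn G (insert x C) := by
  have hpair : Conn G {x, u} := by
    rintro P ⟨a, ha, hPa⟩ hP b hb
    have h1 : x ∈ ({x, u} : Set V) := by simp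
    have h2 : u ∈ ({x, u} : Set V) := by simp
    rcases ha with rfl | rfl <;> rcases hb with rfl | rfl
    · exact hPa
    · exact hP _ h1 _ h2 hxu hPa
    · exact hP _ h2 _ h1 hxu.symm hPa
    · exact hPa
  have := hpair.union hC (z := u) (by simp) hu
  rwa [show ({x, u} : Set V) ∪ C = Insert.insert x C by
    ext c; simp only [Set.mem_union, Set.mem_insert_iff, Set.mem_singleton_iff]; grind] at this

/-- `b` is the end of a walk of length `n` from `x` whose later vertices lie in `H`. -/
inductive RN (G : SimpleGraph V) (H : Set V) (x : V) : ℕ → V → Prop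
  | zero : RN G H x 0 x
  | succ {n : ℕ} {u v : V} : RN G H x n u → u ∈ H → G.Adj u v → v ∈ H → RN G H x (n + 1) v

lemma exists_levelling {H : Set V} (hH : Conn G H) {x : V} (hx : x ∈ H) :
    ∃ d, Levelling G H x d := by
  have hex : ∀ z ∈ H, {n | RN G H x n z}.Nonempty :=
    hH (fun z => {n | RN G H x n z}.Nonempty) ⟨x, hx, 0, .zero⟩
      fun u hu w hw huw ⟨n, hn⟩ => ⟨n + 1, .succ hn hu huw hw⟩
  refine ⟨fun z => sInf {n | RN G H x n z}, ?_, ?_, ?_, ?_⟩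
  · exact Nat.sInf_eq_zero.2 (Or.inl .zero)
  · intro z hz h0
    have h1 : RN G H x _ z := Nat.sInf_mem (hex z hz)
    rw [h0] at h1
    cases h1
    rfl
  · intro z hz n hn
    have h1 : RN G H x _ z := Nat.sInf_mem (hex z hz)
    rw [hn] at h1
    cases h1 with
    | @succ _ u _ h2 hu huz _ =>
      refine ⟨u, hu, huz, le_antisymm (Nat.sInf_le h2) ?_⟩
      by_contra hlt
      push Not at hlt
      have h3 : RN G H x _ u := Nat.sInf_mem (hex u hu)
      have h4 : sInf {n | RN G H x n z} ≤ _ := Nat.sInf_le (.succ h3 hu huz hz)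
      omega
  · intro a ha b hb hab
    have h3 : RN G H x _ a := Nat.sInf_mem (hex a ha)
    exact Nat.sInf_le (.succ h3 ha hab hb)

lemma Levelling.not_adj {H : Set V} {x : V} {d : V → ℕ} (hd : Levelling G H x d) {a b : V}
    (ha : a ∈ H) (hb : b ∈ H) (h : d a + 2 ≤ d b) : ¬ G.Adj a b := fun hab => by
  have := hd.step a ha b hb hab
  omega

/-- Two disjoint palettes, used alternately, color all levels at once. -/
lemma Levelling.exists_level {H : Set V} {x : V} {d : V → ℕ} (hd : Levelling G H x d) {n : ℕ}
    (h : ¬ ColS G H (2 * n)) : ∃ j, ¬ ColS G {z | z ∈ H ∧ d z = j} n := by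
  by_contra hcon
  push Not at hcon
  choose F hF using hcon
  refine h ⟨fun z => F (d z) z + n * (d z % 2), fun a ha => ?_⟩
  have h1 := hF (d a) a ⟨ha, rfl⟩
  have h2 : d a % 2 = 0 ∨ d a % 2 = 1 := by omega
  refine ⟨by rcases h2 with h2 | h2 <;> simp only [h2] <;> omega, fun b hb hab heq => ?_⟩
  have h3 := hF (d b) b ⟨hb, rfl⟩
  have h4 : d b % 2 = 0 ∨ d b % 2 = 1 := by omega
  have s1 := hd.step a ha b hb hab
  have s2 := hd.step b hb a ha hab.symm
  by_cases hj : d b = d a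
  · have := h1.2 b ⟨hb, hj⟩ hab
    simp only [hj] at heq
    omega
  · rcases h2 with h2 | h2 <;> rcases h4 with h4 | h4 <;> simp only [h2, h4] at heq <;> omega

/-! ### Induced paths and holes -/

lemma IP.left_mem {x y : V} {l : List V} (h : IP G x y l) : x ∈ l := by
  cases h <;> simp

lemma IP.right_mem {x y : V} {l : List V} (h : IP G x y l) : y ∈ l := by
  induction h with
  | single => simp
  | cons _ _ _ ih => exact List.mem_cons_of_mem _ ih

lemma IP.one_le {x y : V} {l : List V} (h : IP G x y l) : 1 ≤ l.length := by
  cases h <;> simp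

lemma IP.two_le {x y : V} {l : List V} (h : IP G x y l) (hxy : x ≠ y) : 2 ≤ l.length := by
  cases h with
  | single => exact (hxy rfl).elim
  | cons _ _ h => have := h.one_le; simp only [List.length_cons]; omega

/-- Two induced paths sharing the end `y` concatenate if their other vertices are disjoint and no
edge joins them. -/
lemma IP.append {x y z : V} {l₁ l₂ : List V} (h₁ : IP G x y l₁) (h₂ : IP G y z l₂)
    (h : ∀ c ∈ l₁, c ≠ y → ∀ e ∈ l₂, e ≠ y → e ≠ c ∧ ¬ G.Adj c e) :
    ∃ l, IP G x z l ∧ l.length + 1 = l₁.length + l₂.length ∧ ∀ c, c ∈ l ↔ c ∈ l₁ ∨ c ∈ l₂ := by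
  induction h₁ with
  | single x =>
    refine ⟨l₂, h₂, by simp [add_comm], fun c => ?_⟩
    have := h₂.left_mem
    simp only [List.mem_singleton]
    grind
  | cons hax hc h₁ ih =>
    rename_i a x y l
    obtain ⟨m, hm, hlen, hmem⟩ := ih h₂ fun c hc' => h c (List.mem_cons_of_mem _ hc')
    have hy := h₁.right_mem
    have hay : a ≠ y := by
      rintro rfl
      rcases hc a hy with rfl | h'
      · exact G.loopless.irrefl _ hax
      · exact h'.1 rfl
    refine ⟨a :: m, .cons hax ?_ hm, by simp only [List.length_cons]; omega, ?_⟩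
    · intro c hcm
      rcases (hmem c).1 hcm with h' | h'
      · exact hc c h'
      · by_cases hcy : c = y
        · subst hcy; exact hc c hy
        · exact Or.inr (h a (by simp) hay c h' hcy)
    · intro c
      simp only [List.mem_cons, hmem, or_assoc]

lemma IP.snoc {x y z : V} {l : List V} (h : IP G x y l) (hyz : G.Adj y z)
    (hc : ∀ c ∈ l, c ≠ y → z ≠ c ∧ ¬ G.Adj c z) :
    ∃ m, IP G x z m ∧ m.length = l.length + 1 ∧ ∀ c, c ∈ m ↔ c ∈ l ∨ c = z := by
  have h2 : IP G y z [y, z] := .cons hyz (by simp) (.single z)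
  obtain ⟨m, hm, hlen, hmem⟩ := h.append h2 (by
    intro c hcl hcy e he hey
    have : e = z := by simpa [hey] using he
    subst this
    exact hc c hcl hcy)
  refine ⟨m, hm, by simpa using hlen, fun c => ?_⟩
  have := h.right_mem
  simp only [hmem, List.mem_cons, List.not_mem_nil, or_false]
  grind

lemma IP.reverse {x y : V} {l : List V} (h : IP G x y l) :
    ∃ m, IP G y x m ∧ m.length = l.length ∧ ∀ c, c ∈ m ↔ c ∈ l := by
  induction h with
  | single x => exact ⟨[x], .single x, rfl, fun _ => Iff.rfl⟩
  | cons hax hc h ih =>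
    rename_i a x y l
    obtain ⟨m, hm, hlen, hmem⟩ := ih
    obtain ⟨m', hm', hlen', hmem'⟩ := hm.snoc hax.symm (by
      intro c hcm hcx
      rcases hc c ((hmem c).1 hcm) with h' | h'
      · exact (hcx h').elim
      · exact ⟨h'.1.symm, fun h'' => h'.2 h''.symm⟩)
    refine ⟨m', hm', by simp [hlen', hlen], fun c => ?_⟩
    simp only [hmem', hmem, List.mem_cons]
    tauto

/-- The part of an induced path from its last vertex with property `Q` on. -/
lemma IP.suffix {x y : V} {l : List V} (h : IP G x y l) (Q : V → Prop) (hQ : ∃ c ∈ l, Q c) :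
    ∃ c m, Q c ∧ IP G c y m ∧ (∀ e ∈ m, e ∈ l) ∧ ∀ e ∈ m, Q e → e = c := by
  induction h with
  | single x =>
    obtain ⟨c, hc, hQc⟩ := hQ
    obtain rfl : c = x := by simpa using hc
    exact ⟨c, [c], hQc, .single c, fun _ h => h, by simp⟩
  | cons hax hc h ih =>
    rename_i a x y l
    by_cases hl : ∃ c ∈ l, Q c
    · obtain ⟨c, m, h1, h2, h3, h4⟩ := ih hl
      exact ⟨c, m, h1, h2, fun e he => List.mem_cons_of_mem _ (h3 e he), h4⟩
    · push Not at hl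
      obtain ⟨c, hc', hQc⟩ := hQ
      obtain rfl : c = a := by
        rcases List.mem_cons.1 hc' with h' | h'
        · exact h'
        · exact (hl c h' hQc).elim
      refine ⟨c, c :: l, hQc, .cons hax hc h, fun _ h => h, fun e he hQe => ?_⟩
      rcases List.mem_cons.1 he with h' | h'
      · exact h'
      · exact (hl e h' hQe).elim

/-- Inside a connected set, an induced path leads from any vertex to the set `T`, meeting `T`
only at its end. -/
lemma Conn.exists_path {C : Set V} (hC : Conn G C) (T : Set V) {t : V} (htC : t ∈ C)
    (htT : t ∈ T) {s : V} (hs : s ∈ C) :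
    ∃ y l, IP G s y l ∧ y ∈ T ∧ (∀ c ∈ l, c ∈ C) ∧ ∀ c ∈ l, c ∈ T → c = y := by
  refine hC (fun s => ∃ y l, IP G s y l ∧ y ∈ T ∧ (∀ c ∈ l, c ∈ C) ∧ ∀ c ∈ l, c ∈ T → c = y)
    ⟨t, htC, t, [t], .single t, htT, by simpa using htC, by simp⟩ ?_ s hs
  rintro u hu w hw huw ⟨y, l, hl, hyT, hlC, hlT⟩
  by_cases hwT : w ∈ T
  · exact ⟨w, [w], .single w, hwT, by simpa using hw, by simp⟩
  by_cases hwl : w ∈ l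
  · obtain ⟨c, m, rfl, h2, h3, -⟩ := hl.suffix (· = w) ⟨w, hwl, rfl⟩
    exact ⟨y, m, h2, hyT, fun c hc => hlC c (h3 c hc), fun c hc => hlT c (h3 c hc)⟩
  · obtain ⟨c, m, h1, h2, h3, h4⟩ := hl.suffix (fun c => G.Adj w c) ⟨u, hl.left_mem, huw.symm⟩
    refine ⟨y, w :: m, .cons h1 (fun e he => ?_) h2, hyT, ?_, ?_⟩
    · by_cases hwe : G.Adj w e
      · exact Or.inl (h4 e he hwe)
      · exact Or.inr ⟨fun h => hwl (h ▸ h3 e he), hwe⟩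
    · intro e he
      rcases List.mem_cons.1 he with rfl | h'
      · exact hw
      · exact hlC e (h3 e h')
    · intro e he heT
      rcases List.mem_cons.1 he with rfl | h'
      · exact (hwT heT).elim
      · exact hlT e (h3 e h') heT

/-- Two vertices with neighbors in a connected set are joined by an induced path through it;
the list consists of the interior vertices. -/
lemma Conn.exists_link {C : Set V} (hC : Conn G C) {a b : V} (ha : ∃ c ∈ C, G.Adj a c)
    (hb : ∃ c ∈ C, G.Adj b c) :
    ∃ x y l, IP G x y l ∧ G.Adj a x ∧ G.Adj b y ∧ (∀ c ∈ l, c ∈ C) ∧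
      (∀ c ∈ l, G.Adj a c → c = x) ∧ ∀ c ∈ l, G.Adj b c → c = y := by
  obtain ⟨s, hs, has⟩ := ha
  obtain ⟨t, ht, hbt⟩ := hb
  obtain ⟨y, l, hl, hy, hlC, hlT⟩ := hC.exists_path {c | G.Adj b c} ht hbt hs
  obtain ⟨c, m, h1, h2, h3, h4⟩ := hl.suffix (fun c => G.Adj a c) ⟨s, hl.left_mem, has⟩
  exact ⟨c, y, m, h2, h1, hy, fun e he => hlC e (h3 e he), h4, fun e he => hlT e (h3 e he)⟩

/-- The same with a prescribed endpoint `y` of the set in place of one outer vertex. -/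
lemma Conn.exists_link_to {C : Set V} (hC : Conn G C) {a y : V} (ha : ∃ c ∈ C, G.Adj a c)
    (hy : y ∈ C) :
    ∃ x l, IP G x y l ∧ G.Adj a x ∧ (∀ c ∈ l, c ∈ C) ∧ ∀ c ∈ l, G.Adj a c → c = x := by
  obtain ⟨s, hs, has⟩ := ha
  obtain ⟨y', l, hl, hy', hlC, -⟩ := hC.exists_path {y} hy rfl hs
  obtain rfl : y' = y := hy'
  obtain ⟨c, m, h1, h2, h3, h4⟩ := hl.suffix (fun c => G.Adj a c) ⟨s, hl.left_mem, has⟩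
  exact ⟨c, m, h2, h1, fun e he => hlC e (h3 e he), h4⟩

lemma IP.conn {x y : V} {l : List V} (h : IP G x y l) : Conn G {c | c ∈ l} := by
  induction h with
  | single x =>
    rintro P ⟨a, ha, hPa⟩ - b hb
    obtain rfl : a = x := by simpa using ha
    obtain rfl : b = a := by simpa using hb
    exact hPa
  | cons hax hc h ih =>
    rename_i a x y l
    have := ih.insert (x := a) h.left_mem hax
    rwa [show insert a {c | c ∈ l} = {c | c ∈ a :: l} by ext c; simp] at this

/-- The list of an induced path starts and ends at the ends of the path and has distinct entries,
which are adjacent if and only if they are consecutive. -/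
lemma IP.get_spec {x y : V} {l : List V} (h : IP G x y l) :
    l[0]? = some x ∧ l[l.length - 1]? = some y ∧
    ∀ i j (hi : i < l.length) (hj : j < l.length), i < j →
      l[i] ≠ l[j] ∧ (G.Adj l[i] l[j] ↔ j = i + 1) := by
  induction h with
  | single x => simp
  | cons hax hc h ih =>
    rename_i a x y l
    obtain ⟨ih1, ih2, ih3⟩ := ih
    have hlen := h.one_le
    refine ⟨by simp, ?_, ?_⟩
    · rw [show (a :: l).length - 1 = (l.length - 1) + 1 by simp only [List.length_cons]; omega]
      simpa using ih2
    · intro i j hi hj hij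
      obtain ⟨j, rfl⟩ : ∃ j', j = j' + 1 := ⟨j - 1, by omega⟩
      have hj' : j < l.length := by simpa using hj
      rcases i with _ | i
      · simp only [List.getElem_cons_zero, List.getElem_cons_succ]
        have hx0 : l[0] = x := by
          rw [List.getElem?_eq_getElem (by omega)] at ih1
          exact Option.some.inj ih1
        rcases j with _ | j
        · rw [hx0]
          exact ⟨hax.ne, by simpa using hax⟩
        · have hne := (ih3 0 (j + 1) (by omega) hj' (by omega)).1
          rw [hx0] at hne
          rcases hc l[j + 1] (List.getElem_mem _) with h' | h'
          · exact (hne h'.symm).elim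
          · exact ⟨h'.1.symm, by simpa using h'.2⟩
      · simp only [List.getElem_cons_succ]
        have := ih3 i j (by simpa using hi) hj' (by omega)
        simpa using this

/-- An induced path on an odd number of at least `5` vertices, together with a vertex adjacent to its
two ends only, is an induced even cycle of length at least `6`. -/
lemma Good.no_hole (hG : Good G) {x y a : V} {l : List V} (h : IP G x y l) (hal : a ∉ l)
    (hax : G.Adj a x) (hay : G.Adj a y) (hc : ∀ c ∈ l, G.Adj a c → c = x ∨ c = y)
    (h5 : 4 ≤ l.length) (hodd : Odd l.length) : False := by
  obtain ⟨g1, g2, g3⟩ := h.get_spec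
  rw [List.getElem?_eq_getElem (by omega)] at g1 g2
  have g1 := Option.some.inj g1
  have g2 := Option.some.inj g2
  obtain ⟨k, hk⟩ : ∃ k, l.length + 1 = k + 2 := ⟨l.length - 1, by omega⟩
  have hodd' := Nat.odd_iff.1 hodd
  refine (hG.hole (k + 2) (by omega) (by rw [Nat.even_iff]; omega)).false ?_
  have hlen : (a :: l).length = k + 2 := by simpa using hk
  have key : ∀ i j (hi : i < (a :: l).length) (hj : j < (a :: l).length), i < j →
      (a :: l)[i] ≠ (a :: l)[j] ∧
        (G.Adj (a :: l)[i] (a :: l)[j] ↔ j = i + 1 ∨ (i = 0 ∧ j = l.length)) := by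
    intro i j hi hj hij
    obtain ⟨j, rfl⟩ : ∃ j', j = j' + 1 := ⟨j - 1, by omega⟩
    have hj' : j < l.length := by simpa using hj
    rcases i with _ | i
    · simp only [List.getElem_cons_zero, List.getElem_cons_succ]
      refine ⟨fun h' => hal (h' ▸ List.getElem_mem _), fun h' => ?_, fun h' => ?_⟩
      · rcases hc _ (List.getElem_mem _) h' with h'' | h''
        · left
          by_contra hj0
          exact (g3 0 j (by omega) hj' (by omega)).1 (g1.trans h''.symm)
        · right
          refine ⟨trivial, ?_⟩
          by_contra hj0
          exact (g3 j (l.length - 1) hj' (by omega) (by omega)).1 (h''.trans g2.symm)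
      · rcases h' with h' | h'
        · obtain rfl : j = 0 := by omega
          rwa [g1]
        · obtain rfl : j = l.length - 1 := by omega
          rwa [g2]
    · simp only [List.getElem_cons_succ]
      have := g3 i j (by simpa using hi) hj' (by omega)
      refine ⟨this.1, this.2.trans ?_⟩
      omega
  let f : Fin (k + 2) → V := fun i => (a :: l)[i.1]'(by rw [hlen]; exact i.2)
  have hf : ∀ i j : Fin (k + 2), i < j → f i ≠ f j ∧
      (G.Adj (f i) (f j) ↔ (cycleGraph (k + 2)).Adj i j) := by
    intro i j hij
    have := key i.1 j.1 (by rw [hlen]; exact i.2) (by rw [hlen]; exact j.2) hij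
    refine ⟨this.1, this.2.trans ?_⟩
    rw [cycleGraph_adj']
    have h1 := i.2
    have h2 := j.2
    have hij' : i.1 < j.1 := hij
    rw [Fin.sub_val_of_le hij.le, Fin.coe_sub_iff_lt.2 hij]
    omega
  refine ⟨⟨f, fun i j hij => ?_⟩, fun {i j} => ?_⟩
  · rcases lt_trichotomy i j with h' | h' | h'
    · exact ((hf i j h').1 hij).elim
    · exact h'
    · exact ((hf j i h').1 hij.symm).elim
  · change G.Adj (f i) (f j) ↔ _
    rcases lt_trichotomy i j with h' | h' | h'
    · exact (hf i j h').2
    · subst h'; simp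
    · rw [G.adj_comm, (cycleGraph (k + 2)).adj_comm]; exact (hf j i h').2


lemma Good.no_C6 (hG : Good G) {a b c d e f : V} (hab : G.Adj a b) (hbc : G.Adj b c)
    (hcd : G.Adj c d) (hde : G.Adj d e) (hef : G.Adj e f) (hfa : G.Adj f a)
    (nac : ¬ G.Adj a c) (nbd : ¬ G.Adj b d) (nce : ¬ G.Adj c e) (ndf : ¬ G.Adj d f)
    (nea : ¬ G.Adj e a) (nfb : ¬ G.Adj f b) (nad : ¬ G.Adj a d) (nbe : ¬ G.Adj b e)
    (ncf : ¬ G.Adj c f) : False := by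
  have hs : ∀ {u v}, G.Adj u v → G.Adj v u := fun h => h.symm
  have h : IP G b f [b, c, d, e, f] := by
    refine .cons hbc ?_ (.cons hcd ?_ (.cons hde ?_ (.cons hef ?_ (.single f)))) <;>
      simp only [List.mem_cons, List.not_mem_nil, or_false, forall_eq_or_imp, forall_eq] <;> grind
  refine hG.no_hole h ?_ hab hfa.symm ?_ (by simp) ⟨2, by simp⟩
  · simp only [List.mem_cons, List.not_mem_nil, or_false]; grind
  · simp only [List.mem_cons, List.not_mem_nil, or_false, forall_eq_or_imp, forall_eq]; grind

/-! ### Sets dominated by three layers -/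

/-- `C` and `D` are disjoint and no edge joins them. -/
def Anti (G : SimpleGraph V) (C D : Set V) : Prop := ∀ c ∈ C, ∀ e ∈ D, e ≠ c ∧ ¬ G.Adj c e

/-- `U` is connected, disjoint from `A`, and every vertex of `A` has a neighbor in `U`. -/
structure Layer (G : SimpleGraph V) (A U : Set V) : Prop where
  conn : Conn G U
  notMem : ∀ a ∈ A, a ∉ U
  hits : ∀ a ∈ A, ∃ c ∈ U, G.Adj a c

lemma IP.eq_of_length {x y : V} {l : List V} (h : IP G x y l) (hl : l.length = 1) : x = y := by
  by_contra hxy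
  have := h.two_le hxy
  omega

/-- Two links of equal parity between `a` and `b` through anticomplete layers close up to an
induced even cycle, which must have length four. -/
lemma Good.link_parity (hG : Good G) {a b x y x' y' : V} {l l' : List V} (hne : a ≠ b)
    (hab : ¬ G.Adj a b) (h : IP G x y l) (h' : IP G x' y' l') (hax : G.Adj a x)
    (hby : G.Adj b y) (hla : ∀ c ∈ l, G.Adj a c → c = x) (hlb : ∀ c ∈ l, G.Adj b c → c = y)
    (hax' : G.Adj a x') (hby' : G.Adj b y') (hla' : ∀ c ∈ l', G.Adj a c → c = x')
    (hlb' : ∀ c ∈ l', G.Adj b c → c = y') (hal : a ∉ l) (hbl : b ∉ l) (hal' : a ∉ l')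
    (hbl' : b ∉ l') (hanti : ∀ c ∈ l, ∀ e ∈ l', e ≠ c ∧ ¬ G.Adj c e)
    (hpar : (l.length + l'.length) % 2 = 0) : x = y ∧ x' = y' := by
  have h1 := h.one_le
  have h1' := h'.one_le
  by_cases hlen : l.length + l'.length = 2
  · exact ⟨h.eq_of_length (by omega), h'.eq_of_length (by omega)⟩
  exfalso
  obtain ⟨m, hm, hmlen, hmm⟩ := h.snoc hby.symm (fun c hc hcy =>
    ⟨fun hh => hbl (hh ▸ hc), fun hh => hcy (hlb c hc hh.symm)⟩)
  obtain ⟨r, hr, hrlen, hrm⟩ := h'.reverse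
  have hr' : IP G b x' (b :: r) := .cons hby' (fun c hc => by
    have hc' := (hrm c).1 hc
    by_cases hbc : G.Adj b c
    · exact Or.inl (hlb' c hc' hbc)
    · exact Or.inr ⟨fun hh => hbl' (hh ▸ hc'), hbc⟩) hr
  obtain ⟨q, hq, hqlen, hqm⟩ := hm.append hr' (by
    intro c hc hcb e he heb
    have hcl : c ∈ l := by
      rcases (hmm c).1 hc with hh | hh
      · exact hh
      · exact (hcb hh).elim
    have hel : e ∈ l' := by
      rcases List.mem_cons.1 he with hh | hh
      · exact (heb hh).elim
      · exact (hrm e).1 hh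
    exact hanti c hcl e hel)
  have hqm' : ∀ c, c ∈ q ↔ c ∈ l ∨ c = b ∨ c ∈ l' := by
    intro c
    rw [hqm, hmm, List.mem_cons, hrm]
    tauto
  rw [List.length_cons, hrlen, hmlen] at hqlen
  refine hG.no_hole hq ?_ hax hax' ?_ (by omega) (Nat.odd_iff.2 (by omega))
  · rw [hqm']
    rintro (hh | hh | hh)
    · exact hal hh
    · exact hne hh
    · exact hal' hh
  · intro c hc hac
    rcases (hqm' c).1 hc with hh | hh | hh
    · exact Or.inl (hla c hh hac)
    · exact (hab (hh ▸ hac)).elim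
    · exact Or.inr (hla' c hh hac)

/-- Among the links between `a` and `b` through three pairwise anticomplete layers, two have the
same parity, and then both of them are single vertices. -/
lemma Good.two_of_three (hG : Good G) {A U₁ U₂ U₃ : Set V} (h₁ : Layer G A U₁)
    (h₂ : Layer G A U₂) (h₃ : Layer G A U₃) (h₁₂ : Anti G U₁ U₂) (h₁₃ : Anti G U₁ U₃)
    (h₂₃ : Anti G U₂ U₃) {a b : V} (ha : a ∈ A) (hb : b ∈ A) (hne : a ≠ b)
    (hab : ¬ G.Adj a b) :
    ((∃ c ∈ U₁, G.Adj a c ∧ G.Adj b c) ∧ ∃ c ∈ U₂, G.Adj a c ∧ G.Adj b c) ∨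
    ((∃ c ∈ U₁, G.Adj a c ∧ G.Adj b c) ∧ ∃ c ∈ U₃, G.Adj a c ∧ G.Adj b c) ∨
    ((∃ c ∈ U₂, G.Adj a c ∧ G.Adj b c) ∧ ∃ c ∈ U₃, G.Adj a c ∧ G.Adj b c) := by
  obtain ⟨x₁, y₁, l₁, p₁, a₁, b₁, m₁, ua₁, ub₁⟩ := h₁.conn.exists_link (h₁.hits a ha) (h₁.hits b hb)
  obtain ⟨x₂, y₂, l₂, p₂, a₂, b₂, m₂, ua₂, ub₂⟩ := h₂.conn.exists_link (h₂.hits a ha) (h₂.hits b hb)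
  obtain ⟨x₃, y₃, l₃, p₃, a₃, b₃, m₃, ua₃, ub₃⟩ := h₃.conn.exists_link (h₃.hits a ha) (h₃.hits b hb)
  have na₁ : a ∉ l₁ := fun h => h₁.notMem a ha (m₁ a h)
  have nb₁ : b ∉ l₁ := fun h => h₁.notMem b hb (m₁ b h)
  have na₂ : a ∉ l₂ := fun h => h₂.notMem a ha (m₂ a h)
  have nb₂ : b ∉ l₂ := fun h => h₂.notMem b hb (m₂ b h)
  have na₃ : a ∉ l₃ := fun h => h₃.notMem a ha (m₃ a h)
  have nb₃ : b ∉ l₃ := fun h => h₃.notMem b hb (m₃ b h)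
  have hpar : (l₁.length + l₂.length) % 2 = 0 ∨ (l₁.length + l₃.length) % 2 = 0 ∨
      (l₂.length + l₃.length) % 2 = 0 := by omega
  rcases hpar with hp | hp | hp
  · obtain ⟨rfl, rfl⟩ := hG.link_parity hne hab p₁ p₂ a₁ b₁ ua₁ ub₁ a₂ b₂ ua₂ ub₂ na₁ nb₁ na₂ nb₂
      (fun c hc e he => h₁₂ c (m₁ c hc) e (m₂ e he)) hp
    exact Or.inl ⟨⟨_, m₁ _ p₁.left_mem, a₁, b₁⟩, ⟨_, m₂ _ p₂.left_mem, a₂, b₂⟩⟩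
  · obtain ⟨rfl, rfl⟩ := hG.link_parity hne hab p₁ p₃ a₁ b₁ ua₁ ub₁ a₃ b₃ ua₃ ub₃ na₁ nb₁ na₃ nb₃
      (fun c hc e he => h₁₃ c (m₁ c hc) e (m₃ e he)) hp
    exact Or.inr (Or.inl ⟨⟨_, m₁ _ p₁.left_mem, a₁, b₁⟩, ⟨_, m₃ _ p₃.left_mem, a₃, b₃⟩⟩)
  · obtain ⟨rfl, rfl⟩ := hG.link_parity hne hab p₂ p₃ a₂ b₂ ua₂ ub₂ a₃ b₃ ua₃ ub₃ na₂ nb₂ na₃ nb₃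
      (fun c hc e he => h₂₃ c (m₂ c hc) e (m₃ e he)) hp
    exact Or.inr (Or.inr ⟨⟨_, m₂ _ p₂.left_mem, a₂, b₂⟩, ⟨_, m₃ _ p₃.left_mem, a₃, b₃⟩⟩)

/-- A Helly property: in a graph with no triangle and no induced `C₆`, a stable set whose members
pairwise have common neighbors has a common neighbor as a whole. In a minimal counterexample `S`,
common neighbors of `S - a`, `S - b`, `S - c` form an induced `C₆` with `a`, `b`, `c`. -/
lemma Good.helly (hG : Good G) (S : Finset V) (hne : S.Nonempty)
    (hst : ∀ a ∈ S, ∀ b ∈ S, ¬ G.Adj a b)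
    (hpair : ∀ a ∈ S, ∀ b ∈ S, ∃ c, G.Adj a c ∧ G.Adj b c) : ∃ u, ∀ s ∈ S, G.Adj u s := by
  classical
  induction S using Finset.strongInduction with
  | H S ih =>
    by_cases hcard : S.card ≤ 2
    · have hpos := hne.card_pos
      obtain ⟨a, b, rfl⟩ : ∃ a b, S = {a, b} := by
        interval_cases hS : S.card
        · obtain ⟨a, rfl⟩ := Finset.card_eq_one.1 hS
          exact ⟨a, a, by simp⟩
        · obtain ⟨a, b, -, rfl⟩ := Finset.card_eq_two.1 hS
          exact ⟨a, b, rfl⟩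
      obtain ⟨c, hac, hbc⟩ := hpair a (by simp) b (by simp)
      exact ⟨c, by simpa using ⟨hac.symm, hbc.symm⟩⟩
    · obtain ⟨a, b, c, ha, hb, hc, hab, hac, hbc⟩ := Finset.two_lt_card_iff.1 (not_le.1 hcard)
      have hsub : ∀ z ∈ S, (S.erase z).Nonempty → ∃ u, ∀ s ∈ S, s ≠ z → G.Adj u s := by
        intro z hz hzne
        obtain ⟨u, hu⟩ := ih (S.erase z) (Finset.erase_ssubset hz) hzne
          (fun p hp q hq => hst p (Finset.mem_of_mem_erase hp) q (Finset.mem_of_mem_erase hq))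
          (fun p hp q hq => hpair p (Finset.mem_of_mem_erase hp) q (Finset.mem_of_mem_erase hq))
        exact ⟨u, fun s hs hsz => hu s (Finset.mem_erase.2 ⟨hsz, hs⟩)⟩
      obtain ⟨u, hu⟩ := hsub a ha ⟨b, Finset.mem_erase.2 ⟨hab.symm, hb⟩⟩
      obtain ⟨v, hv⟩ := hsub b hb ⟨a, Finset.mem_erase.2 ⟨hab, ha⟩⟩
      obtain ⟨w, hw⟩ := hsub c hc ⟨a, Finset.mem_erase.2 ⟨hac, ha⟩⟩
      by_cases hua : G.Adj u a
      · exact ⟨u, fun s hs => by by_cases h : s = a; exacts [h ▸ hua, hu s hs h]⟩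
      by_cases hvb : G.Adj v b
      · exact ⟨v, fun s hs => by by_cases h : s = b; exacts [h ▸ hvb, hv s hs h]⟩
      by_cases hwc : G.Adj w c
      · exact ⟨w, fun s hs => by by_cases h : s = c; exacts [h ▸ hwc, hw s hs h]⟩
      exact (hG.no_C6 (hw a ha hac).symm (hw b hb hbc) (hu b hb hab.symm).symm
        (hu c hc hac.symm) (hv c hc hbc.symm).symm (hv a ha hab)
        (hst a ha b hb) (fun h => hG.tri _ _ _ h (hu b hb hab.symm) (hw b hb hbc))
        (hst b hb c hc) (fun h => hG.tri _ _ _ h (hv c hc hbc.symm) (hu c hc hac.symm))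
        (hst c hc a ha) (fun h => hG.tri _ _ _ h (hw a ha hac) (hv a ha hab))
        (fun h => hua h.symm) hwc (fun h => hvb h.symm)).elim

/-- A set dominated by three pairwise anticomplete layers is `3`-colorable: it induces no `2K₂`,
since for an induced `2K₂` with edges `a a'` and `b b'`, the pairs `a, b` and `a', b'` have common
neighbors in different layers, giving an induced `C₆`. -/
lemma Good.colS_three (hG : Good G) {A U₁ U₂ U₃ : Set V} (h₁ : Layer G A U₁)
    (h₂ : Layer G A U₂) (h₃ : Layer G A U₃) (h₁₂ : Anti G U₁ U₂) (h₁₃ : Anti G U₁ U₃)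
    (h₂₃ : Anti G U₂ U₃) : ColS G A 3 := by
  by_cases hst : ∀ a ∈ A, ∀ b ∈ A, ¬ G.Adj a b
  · exact (ColS.of_stable hst).mono subset_rfl (by omega)
  push Not at hst
  obtain ⟨a, ha, a', ha', haa⟩ := hst
  have hrest : ColS G {b | b ∈ A ∧ ¬ G.Adj a b ∧ ¬ G.Adj a' b} 1 := by
    refine ColS.of_stable ?_
    rintro b ⟨hb, nab, na'b⟩ b' ⟨hb', nab', na'b'⟩ hbb
    have hne : a ≠ b := fun h => na'b (h ▸ haa.symm)
    have hne' : a' ≠ b' := fun h => nab' (h ▸ haa)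
    have key : ∀ y y', G.Adj a y → G.Adj b y → G.Adj a' y' → G.Adj b' y' → ¬ G.Adj y' y →
        False := by
      intro y y' hay hby hay' hby' hyy
      exact hG.no_C6 haa hay' hby'.symm hbb.symm hby hay.symm
        (fun h => hG.tri _ _ _ haa hay' h) na'b'
        (fun h => hG.tri _ _ _ hbb hby' h.symm)
        (fun h => hG.tri _ _ _ hbb h hby) (fun h => nab h.symm)
        (fun h => hG.tri _ _ _ haa h.symm hay) nab' na'b hyy
    have t := hG.two_of_three h₁ h₂ h₃ h₁₂ h₁₃ h₂₃ ha hb hne nab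
    have t' := hG.two_of_three h₁ h₂ h₃ h₁₂ h₁₃ h₂₃ ha' hb' hne' na'b'
    have k₁₂ : (∃ c ∈ U₁, G.Adj a c ∧ G.Adj b c) → (∃ c ∈ U₂, G.Adj a' c ∧ G.Adj b' c) → False :=
      fun ⟨y, hy, h1, h2⟩ ⟨y', hy', h3, h4⟩ =>
        key y y' h1 h2 h3 h4 fun h => (h₁₂ y hy y' hy').2 h.symm
    have k₁₃ : (∃ c ∈ U₁, G.Adj a c ∧ G.Adj b c) → (∃ c ∈ U₃, G.Adj a' c ∧ G.Adj b' c) → False :=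
      fun ⟨y, hy, h1, h2⟩ ⟨y', hy', h3, h4⟩ =>
        key y y' h1 h2 h3 h4 fun h => (h₁₃ y hy y' hy').2 h.symm
    have k₂₃ : (∃ c ∈ U₂, G.Adj a c ∧ G.Adj b c) → (∃ c ∈ U₃, G.Adj a' c ∧ G.Adj b' c) → False :=
      fun ⟨y, hy, h1, h2⟩ ⟨y', hy', h3, h4⟩ =>
        key y y' h1 h2 h3 h4 fun h => (h₂₃ y hy y' hy').2 h.symm
    have k₂₁ : (∃ c ∈ U₂, G.Adj a c ∧ G.Adj b c) → (∃ c ∈ U₁, G.Adj a' c ∧ G.Adj b' c) → False :=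
      fun ⟨y, hy, h1, h2⟩ ⟨y', hy', h3, h4⟩ =>
        key y y' h1 h2 h3 h4 fun h => (h₁₂ y' hy' y hy).2 h
    rcases t with ⟨t₁, t₂⟩ | ⟨t₁, t₃⟩ | ⟨t₂, t₃⟩
    · rcases t' with ⟨t₁', t₂'⟩ | ⟨t₁', t₃'⟩ | ⟨t₂', t₃'⟩
      exacts [k₁₂ t₁ t₂', k₁₃ t₁ t₃', k₁₂ t₁ t₂']
    · rcases t' with ⟨t₁', t₂'⟩ | ⟨t₁', t₃'⟩ | ⟨t₂', t₃'⟩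
      exacts [k₁₂ t₁ t₂', k₁₃ t₁ t₃', k₁₂ t₁ t₂']
    · rcases t' with ⟨t₁', t₂'⟩ | ⟨t₁', t₃'⟩ | ⟨t₂', t₃'⟩
      exacts [k₂₁ t₂ t₁', k₂₁ t₂ t₁', k₂₃ t₂ t₃']
  refine (((hG.colS_nbr a).union (hG.colS_nbr a')).union hrest).mono ?_ le_rfl
  intro b hb
  by_cases h : G.Adj a b
  · exact Or.inl (Or.inl h)
  by_cases h' : G.Adj a' b
  · exact Or.inl (Or.inr h')
  · exact Or.inr ⟨hb, h, h'⟩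

/-- A color class of `A` is stable and its members pairwise have common neighbors, so by the Helly
property a single vertex `u` dominates it, and the vertices it dominates lie in `N2 G u`. -/
lemma Good.colS_of_layers [Finite V] (hG : Good G) {τ : ℕ} (hτ : ∀ v, ColS G (N2 G v) τ)
    {A L U₁ U₂ U₃ : Set V} (h₁ : Layer G A U₁)
    (h₂ : Layer G A U₂) (h₃ : Layer G A U₃) (h₁₂ : Anti G U₁ U₂) (h₁₃ : Anti G U₁ U₃)
    (h₂₃ : Anti G U₂ U₃) (hAL : ∀ z ∈ L, ∃ a ∈ A, G.Adj a z) : ColS G L (τ + τ + τ) := by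
  classical
  have := Fintype.ofFinite V
  obtain ⟨f, hf⟩ := hG.colS_three h₁ h₂ h₃ h₁₂ h₁₃ h₂₃
  have key : ∀ i, ColS G {z | ∃ a ∈ A, f a = i ∧ G.Adj a z} τ := by
    intro i
    by_cases hne : ∃ a ∈ A, f a = i
    · obtain ⟨a₀, ha₀, hfa₀⟩ := hne
      obtain ⟨u, hu⟩ := hG.helly (Finset.univ.filter fun a => a ∈ A ∧ f a = i)
        ⟨a₀, by simp [ha₀, hfa₀]⟩
        (by
          intro a ha b hb hab
          simp only [Finset.mem_filter, Finset.mem_univ, true_and] at ha hb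
          exact (hf a ha.1).2 b hb.1 hab (ha.2.trans hb.2.symm))
        (by
          intro a ha b hb
          simp only [Finset.mem_filter, Finset.mem_univ, true_and] at ha hb
          by_cases hab : a = b
          · subst hab
            obtain ⟨c, -, hc⟩ := h₁.hits a ha.1
            exact ⟨c, hc, hc⟩
          · have := hG.two_of_three h₁ h₂ h₃ h₁₂ h₁₃ h₂₃ ha.1 hb.1 hab
              (fun h => (hf a ha.1).2 b hb.1 h (ha.2.trans hb.2.symm))
            grind)
      refine (hτ u).mono ?_ le_rfl
      rintro z ⟨a, ha, hfa, haz⟩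
      exact ⟨a, hu a (by simp [ha, hfa]), haz⟩
    · refine ⟨fun _ => 0, fun z hz => (hne ?_).elim⟩
      obtain ⟨a, ha, hfa, -⟩ := hz
      exact ⟨a, ha, hfa⟩
  refine (((key 0).union (key 1)).union (key 2)).mono ?_ le_rfl
  intro z hz
  obtain ⟨a, ha, haz⟩ := hAL z hz
  have h3 := (hf a ha).1
  obtain h | h | h : f a = 0 ∨ f a = 1 ∨ f a = 2 := by omega
  · exact Or.inl (Or.inl ⟨a, ha, h, haz⟩)
  · exact Or.inl (Or.inr ⟨a, ha, h, haz⟩)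
  · exact Or.inr ⟨a, ha, h, haz⟩


/-! ### Parity switches -/

/-- A parity switch inside `K ∪ {x}`: induced paths `l₁`, `l₂` of both parities from the entrance
`x` to the exit `y`, followed by a connected set `L` attached to the paths at `y` only. -/
structure Switch (G : SimpleGraph V) (K : Set V) (x y : V) (l₁ l₂ : List V) (L : Set V) :
    Prop where
  path₁ : IP G x y l₁
  path₂ : IP G x y l₂
  parity : (l₁.length + l₂.length) % 2 = 1
  sub : ∀ c, c ∈ l₁ ∨ c ∈ l₂ → c = x ∨ c ∈ K
  ne : y ≠ x
  not_adj : ¬ G.Adj x y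
  exit_mem : y ∈ K
  rest_sub : L ⊆ K
  rest_conn : Conn G L
  exit_notMem : y ∉ L
  exit_adj : ∃ u ∈ L, G.Adj y u
  anti : ∀ c, c ∈ l₁ ∨ c ∈ l₂ → c ≠ y → ∀ e ∈ L, e ≠ c ∧ ¬ G.Adj c e

lemma Switch.conn {K L : Set V} {x y : V} {l₁ l₂ : List V} (hs : Switch G K x y l₁ l₂ L) :
    Conn G {c | c ∈ l₁ ∨ c ∈ l₂} :=
  hs.path₁.conn.union hs.path₂.conn hs.path₁.left_mem hs.path₂.left_mem

/-- A vertex with neighbors before and after a switch has a neighbor in the switch: otherwise the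
switch closes a hole of either parity through this vertex. -/
lemma Good.hits_switch (hG : Good G) {K L B : Set V} {x y a : V} {l₁ l₂ : List V}
    (hs : Switch G K x y l₁ l₂ L) (hB : Conn G B) (hxB : x ∈ B)
    (hBK : ∀ c ∈ B, c ≠ x → ∀ e ∈ K, e ≠ c ∧ ¬ G.Adj c e) (haB : a ∉ B)
    (ha : ¬ (a ∈ l₁ ∨ a ∈ l₂)) (haL : a ∉ L) (hitB : ∃ c ∈ B, G.Adj a c)
    (hitL : ∃ c ∈ L, G.Adj a c) : ∃ c ∈ {c | c ∈ l₁ ∨ c ∈ l₂}, G.Adj a c := by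
  by_contra hcon
  push Not at hcon
  have hnx : ¬ G.Adj a x := hcon x (Or.inl hs.path₁.left_mem)
  have hny : ¬ G.Adj a y := hcon y (Or.inl hs.path₁.right_mem)
  obtain ⟨m₀, k₀, hk₀, ham₀, hk₀B, hk₀u⟩ := hB.exists_link_to hitB hxB
  obtain ⟨u, hu, hyu⟩ := hs.exit_adj
  have hitL' : ∃ c ∈ insert y L, G.Adj a c := by
    obtain ⟨c, hc, hac⟩ := hitL
    exact ⟨c, Or.inr hc, hac⟩
  obtain ⟨m₁, k, hk, ham₁, hkL, hku⟩ :=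
    (hs.rest_conn.insert hu hyu).exists_link_to hitL' (Or.inl rfl)
  obtain ⟨k₁, hk₁, hk₁len, hk₁m⟩ := hk.reverse
  have hm₀x : m₀ ≠ x := fun h => hnx (h ▸ ham₀)
  have hm₁y : y ≠ m₁ := fun h => hny (h ▸ ham₁)
  have c₀ := hk₀.two_le hm₀x
  have c₁ := hk₁.two_le hm₁y
  have key : ∀ l, IP G x y l → (∀ c ∈ l, c ∈ l₁ ∨ c ∈ l₂) →
      (k₀.length + l.length + k₁.length) % 2 = 1 → False := by
    intro l hl hlm hpar
    have c₂ := hl.two_le hs.ne.symm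
    obtain ⟨q, hq, hqlen, hqm⟩ := hk₀.append hl (by
      intro c hc hcx e he hex
      rcases hs.sub e (hlm e he) with h | h
      · exact (hex h).elim
      · exact hBK c (hk₀B c hc) hcx e h)
    obtain ⟨r, hr, hrlen, hrm⟩ := hq.append hk₁ (by
      intro c hc hcy e he hey
      have heL : e ∈ L := ((hkL e ((hk₁m e).1 he)).resolve_left hey)
      rcases (hqm c).1 hc with h | h
      · by_cases hcx : c = x
        · subst hcx
          exact hs.anti c (Or.inl hs.path₁.left_mem) hcy e heL
        · exact hBK c (hk₀B c h) hcx e (hs.rest_sub heL)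
      · exact hs.anti c (hlm c h) hcy e heL)
    have hrm' : ∀ c, c ∈ r ↔ (c ∈ k₀ ∨ c ∈ l) ∨ c ∈ k := by
      intro c; rw [hrm, hqm, hk₁m]
    refine hG.no_hole hr ?_ ham₀ ham₁ ?_ (by omega) (Nat.odd_iff.2 (by omega))
    · rw [hrm']
      rintro ((h | h) | h)
      · exact haB (hk₀B a h)
      · exact ha (hlm a h)
      · rcases hkL a h with rfl | h'
        · exact ha (Or.inl hs.path₁.right_mem)
        · exact haL h'
    · intro c hc hac
      rcases (hrm' c).1 hc with (h | h) | h
      · exact Or.inl (hk₀u c h hac)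
      · exact (hcon c (hlm c h) hac).elim
      · exact Or.inr (hku c h hac)
  have hpar := hs.parity
  obtain h | h : (k₀.length + l₁.length + k₁.length) % 2 = 1 ∨
      (k₀.length + l₂.length + k₁.length) % 2 = 1 := by omega
  · exact key l₁ hs.path₁ (fun c hc => Or.inl hc) h
  · exact key l₂ hs.path₂ (fun c hc => Or.inr hc) h

/-- A vertex at level `n` is reached from the root by an induced path through the lower levels. -/
lemma Levelling.down {H : Set V} {x : V} {d : V → ℕ} (hd : Levelling G H x d) (hx : x ∈ H)
    (n : ℕ) : ∀ z ∈ H, d z = n →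
      ∃ l, IP G x z l ∧ l.length = n + 1 ∧ ∀ c ∈ l, c ∈ H ∧ (c = z ∨ d c < n) := by
  induction n with
  | zero =>
    intro z hz h0
    obtain rfl := hd.zero z hz h0
    exact ⟨[z], .single z, rfl, by simpa using hz⟩
  | succ n ih =>
    intro z hz hn
    obtain ⟨p, hp, hpz, hdp⟩ := hd.parent z hz n hn
    obtain ⟨l, hl, hlen, hmem⟩ := ih p hp hdp
    obtain ⟨m, hm, hmlen, hmm⟩ := hl.snoc hpz (by
      intro c hc hcp
      obtain ⟨hcH, hc'⟩ := hmem c hc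
      have := hc'.resolve_left hcp
      exact ⟨fun h => by rw [← h] at this; omega, hd.not_adj hcH hz (by omega)⟩)
    refine ⟨m, hm, by omega, fun c hc => ?_⟩
    rcases (hmm c).1 hc with h | h
    · obtain ⟨hcH, hc'⟩ := hmem c h
      refine ⟨hcH, Or.inr ?_⟩
      rcases hc' with rfl | h'
      · omega
      · omega
    · exact ⟨h ▸ hz, Or.inl h⟩

/-- Levels `0` and `1` of a levelling are stable. -/
lemma Good.two_le_level (hG : Good G) {H : Set V} {x : V} {d : V → ℕ} (hd : Levelling G H x d)
    {n j : ℕ} (hn : 1 ≤ n) (hj : ¬ ColS G {z | z ∈ H ∧ d z = j} n) : 2 ≤ j := by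
  by_contra hlt
  refine hj ((ColS.of_stable ?_).mono subset_rfl hn)
  rintro a ⟨ha, hda⟩ b ⟨hb, hdb⟩ hab
  obtain rfl | rfl : j = 0 ∨ j = 1 := by omega
  · rw [hd.zero a ha hda, hd.zero b hb hdb] at hab
    exact G.loopless.irrefl _ hab
  · obtain ⟨p, hp, hpa, hdp⟩ := hd.parent a ha 0 hda
    obtain ⟨p', hp', hpb, hdp'⟩ := hd.parent b hb 0 hdb
    rw [hd.zero p hp hdp] at hpa
    rw [hd.zero p' hp' hdp'] at hpb
    exact hG.tri _ _ _ hpa hab hpb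

/-- If the sets of vertices within a walk of length two from a vertex have bounded chromatic
number, then every connected set of large chromatic number contains a switch with prescribed
entrance whose rest still has large chromatic number. In a level of large chromatic number of a
breadth-first search from the entrance, an edge `w w₂` and parents `p`, `p₂` of its ends yield the
two parities. The parents are separated by first deleting everything within two steps of the
parent `r` of `p`. -/
lemma Good.exists_switch (hG : Good G) {τ : ℕ} (hτ : ∀ v, ColS G (N2 G v) τ) {K : Set V}
    (hK : Conn G K) {x u : V} (hu : u ∈ K) (hxu : G.Adj x u) {n : ℕ}
    (hn : ¬ ColS G K (2 * (n + 3 + τ))) :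
    ∃ y l₁ l₂ L, Switch G K x y l₁ l₂ L ∧ ¬ ColS G L n := by
  have hxH : x ∈ insert x K := Or.inl rfl
  have hHK : ∀ z ∈ insert x K, z ≠ x → z ∈ K := fun z hz hzx => hz.resolve_left hzx
  obtain ⟨d, hd⟩ := exists_levelling (hK.insert hu hxu) hxH
  have hn' : ¬ ColS G (insert x K) (2 * (n + 3 + τ)) :=
    fun h => hn (h.mono (Set.subset_insert _ _) le_rfl)
  generalize insert x K = H at *
  obtain ⟨j, hj⟩ := hd.exists_level hn'
  have hj2 : 2 ≤ j := hG.two_le_level hd (by omega) hj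
  obtain ⟨i, rfl⟩ : ∃ i, j = i + 2 := ⟨j - 2, by omega⟩
  obtain ⟨K₀, hK₀M, hK₀c, -, hK₀n⟩ := exists_component hj
  obtain ⟨h, hh⟩ := ColS.nonempty_of_not hK₀n
  obtain ⟨ph, hph, hphh, hdph⟩ := hd.parent h (hK₀M hh).1 (i + 1) (hK₀M hh).2
  obtain ⟨r, hr, hrph, hdr⟩ := hd.parent ph hph i hdph
  let Z : Set V := {z | ∃ p ∈ H, G.Adj r p ∧ G.Adj p z}
  have hZ : ColS G Z τ := (hτ r).mono (fun z ⟨p, _, h1, h2⟩ => ⟨p, h1, h2⟩) le_rfl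
  obtain ⟨K₁, hK₁s, hK₁c, hK₁cl, hK₁n⟩ := exists_component (not_colS_diff hK₀n hZ)
  obtain ⟨w, hwK₀, ⟨p, hp, hrp, hpw⟩, w₂, hw₂, hww₂⟩ :=
    hK₀c.attach hK₁s (ColS.nonempty_of_not hK₁n) hK₁cl hh ⟨ph, hph, hrph, hphh⟩
  obtain ⟨hwH, hdw⟩ := hK₀M hwK₀
  have hK₁M : ∀ z ∈ K₁, z ∈ H ∧ d z = i + 2 := fun z hz => hK₀M (hK₁s hz).1
  have hK₁Z : ∀ z ∈ K₁, ∀ p ∈ H, G.Adj r p → ¬ G.Adj p z :=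
    fun z hz p hp h1 h2 => (hK₁s hz).2 ⟨p, hp, h1, h2⟩
  obtain ⟨hw₂H, hdw₂⟩ := hK₁M w₂ hw₂
  obtain ⟨p₂, hp₂, hp₂w₂, hdp₂⟩ := hd.parent w₂ hw₂H (i + 1) hdw₂
  have hdp : d p = i + 1 := by
    have h1 := hd.step r hr p hp hrp
    have h2 := hd.step p hp w hwH hpw
    omega
  have hrp₂ : ¬ G.Adj r p₂ := fun h => hK₁Z w₂ hw₂ p₂ hp₂ h hp₂w₂
  let N : Set V := ({z | G.Adj w z} ∪ {z | G.Adj w₂ z}) ∪ {z | G.Adj p₂ z}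
  have hN : ColS G N 3 := ((hG.colS_nbr w).union (hG.colS_nbr w₂)).union (hG.colS_nbr p₂)
  obtain ⟨L, hLs, hLc, hLcl, hLn⟩ := exists_component (not_colS_diff hK₁n hN)
  obtain ⟨q, hqK₁, hqN, e₀, he₀, hqe₀⟩ :=
    hK₁c.attach hLs (ColS.nonempty_of_not hLn) hLcl hw₂ (Or.inl (Or.inl hww₂))
  obtain ⟨hqH, hdq⟩ := hK₁M q hqK₁
  have hLK₁ : ∀ e ∈ L, e ∈ K₁ := fun e he => (hLs he).1
  have hwL : ∀ e ∈ L, ¬ G.Adj w e := fun e he h => (hLs he).2 (Or.inl (Or.inl h))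
  have hw₂L : ∀ e ∈ L, ¬ G.Adj w₂ e := fun e he h => (hLs he).2 (Or.inl (Or.inr h))
  have hp₂L : ∀ e ∈ L, ¬ G.Adj p₂ e := fun e he h => (hLs he).2 (Or.inr h)
  have hpK₁ : ∀ e ∈ K₁, ¬ G.Adj p e := fun e he => hK₁Z e he p hp hrp
  have hwK₁ : w ∉ K₁ := fun hw => hpK₁ w hw hpw
  have hqw₂ : q ≠ w₂ := fun h => hw₂L e₀ he₀ (h ▸ hqe₀)
  have hqw : q ≠ w := fun h => hwK₁ (h ▸ hqK₁)
  have hpw₂ : ¬ G.Adj p w₂ := hpK₁ w₂ hw₂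
  have hpq : ¬ G.Adj p q := hpK₁ q hqK₁
  have hp₂w : ¬ G.Adj p₂ w := fun h => hG.tri _ _ _ h hww₂ hp₂w₂
  have hpp₂ : p₂ ≠ p := fun h => hpw₂ (h ▸ hp₂w₂)
  have low : ∀ c ∈ H, d c ≤ i → ∀ z ∈ H, d z = i + 2 → z ≠ c ∧ ¬ G.Adj c z := by
    intro c hc hdc z hz hdz
    exact ⟨fun h => by rw [h] at hdz; omega, hd.not_adj hc hz (by omega)⟩
  have lev : ∀ c z, d c = i + 1 → d z = i + 2 → z ≠ c := by
    intro c z h1 h2 h3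
    rw [h3] at h2; omega
  -- It suffices to find paths of both parities inside the following set.
  let S : Set V := {c | (c ∈ H ∧ d c ≤ i) ∨ c = p ∨ c = p₂ ∨ c = w ∨ c = w₂ ∨ c = q}
  have hqL : q ∉ L := fun hq => (hLs hq).2 hqN
  have hSH : ∀ c ∈ S, c ∈ H := by
    rintro c (h | rfl | rfl | rfl | rfl | rfl)
    exacts [h.1, hp, hp₂, hwH, hw₂H, hqH]
  have hSL : ∀ c ∈ S, c ≠ q → ∀ e ∈ L, e ≠ c ∧ ¬ G.Adj c e := by
    intro c hc hcq e he
    obtain ⟨heH, hde⟩ := hK₁M e (hLK₁ e he)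
    rcases hc with h | rfl | rfl | rfl | rfl | rfl
    · exact low c h.1 h.2 e heH hde
    · exact ⟨lev _ _ hdp hde, hpK₁ e (hLK₁ e he)⟩
    · exact ⟨lev _ _ hdp₂ hde, hp₂L e he⟩
    · exact ⟨fun h => hwK₁ (h ▸ hLK₁ e he), hwL e he⟩
    · exact ⟨fun h => (hLs he).2 (Or.inl (Or.inl (h ▸ hww₂))), hw₂L e he⟩
    · exact (hcq rfl).elim
  have hqx : x ≠ q := fun h => by rw [← h, hd.root] at hdq; omega
  have suff : ∀ l₁ l₂, IP G x q l₁ → IP G x q l₂ → (l₁.length + l₂.length) % 2 = 1 →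
      (∀ c ∈ l₁, c ∈ S) → (∀ c ∈ l₂, c ∈ S) →
      ∃ y l₁ l₂ L, Switch G K x y l₁ l₂ L ∧ ¬ ColS G L n := by
    intro l₁ l₂ h₁ h₂ hpar hs₁ hs₂
    have hs : ∀ c, c ∈ l₁ ∨ c ∈ l₂ → c ∈ S := fun c hc => hc.elim (hs₁ c) (hs₂ c)
    refine ⟨q, l₁, l₂, L, ⟨h₁, h₂, hpar, ?_, hqx.symm, ?_, ?_, ?_, hLc, hqL, ⟨e₀, he₀, hqe₀⟩, ?_⟩,
      hLn⟩
    · intro c hc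
      by_cases hcx : c = x
      · exact Or.inl hcx
      · exact Or.inr (hHK c (hSH c (hs c hc)) hcx)
    · exact (low x hxH (by rw [hd.root]; omega) q hqH hdq).2
    · exact hHK q hqH hqx.symm
    · intro e he
      obtain ⟨heH, hde⟩ := hK₁M e (hLK₁ e he)
      exact hHK e heH fun h => by rw [h, hd.root] at hde; omega
    · intro c hc
      exact hSL c (hs c hc)
  -- `α` runs from `x` to `r` and on to `p`, `w`, `w₂`; `β` runs from `x` to `p₂`.
  obtain ⟨α, hα, hαlen, hαm⟩ := hd.down hxH i r hr hdr
  obtain ⟨β, hβ, hβlen, hβm⟩ := hd.down hxH (i + 1) p₂ hp₂ hdp₂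
  have hαlow : ∀ c ∈ α, c ∈ H ∧ d c ≤ i := by
    intro c hc
    obtain ⟨h1, h2⟩ := hαm c hc
    refine ⟨h1, ?_⟩
    rcases h2 with rfl | h2
    · omega
    · omega
  have hβlow : ∀ c ∈ β, c ≠ p₂ → c ∈ H ∧ d c ≤ i := by
    intro c hc hcp
    obtain ⟨h1, h2⟩ := hβm c hc
    have := h2.resolve_left hcp
    exact ⟨h1, by omega⟩
  have hαp₂ : ∀ c ∈ α, p₂ ≠ c ∧ ¬ G.Adj c p₂ := by
    intro c hc
    obtain ⟨h1, h2⟩ := hαm c hc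
    refine ⟨fun h => ?_, ?_⟩
    · have := (hαlow c hc).2
      rw [← h] at this
      omega
    · rcases h2 with rfl | h2
      · exact hrp₂
      · exact hd.not_adj h1 hp₂ (by omega)
  have hβS : ∀ c ∈ β, c ∈ S := by
    intro c hc
    by_cases hcp : c = p₂
    · exact Or.inr (Or.inr (Or.inl hcp))
    · exact Or.inl (hβlow c hc hcp)
  obtain ⟨α₁, hα₁, hα₁len, hα₁m⟩ := hα.snoc hrp (by
    intro c hc hcr
    obtain ⟨h1, h2⟩ := hαm c hc
    have := h2.resolve_left hcr
    exact ⟨fun h => by rw [← h] at this; omega, hd.not_adj h1 hp (by omega)⟩)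
  obtain ⟨α₂, hα₂, hα₂len, hα₂m⟩ := hα₁.snoc hpw (by
    intro c hc hcp
    have hc' := ((hα₁m c).1 hc).resolve_right hcp
    exact low c (hαlow c hc').1 (hαlow c hc').2 w hwH hdw)
  obtain ⟨α₃, hα₃, hα₃len, hα₃m⟩ := hα₂.snoc hww₂ (by
    intro c hc hcw
    rcases (hα₁m c).1 (((hα₂m c).1 hc).resolve_right hcw) with h | rfl
    · exact low c (hαlow c h).1 (hαlow c h).2 w₂ hw₂H hdw₂
    · exact ⟨lev _ _ hdp hdw₂, hpw₂⟩)
  have hα₁S : ∀ c ∈ α₁, c ∈ S := by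
    intro c hc
    rcases (hα₁m c).1 hc with h | h
    · exact Or.inl (hαlow c h)
    · exact Or.inr (Or.inl h)
  have hα₂S : ∀ c ∈ α₂, c ∈ S := by
    intro c hc
    rcases (hα₂m c).1 hc with h | h
    · exact hα₁S c h
    · exact Or.inr (Or.inr (Or.inr (Or.inl h)))
  have hα₃S : ∀ c ∈ α₃, c ∈ S := by
    intro c hc
    rcases (hα₃m c).1 hc with h | h
    · exact hα₂S c h
    · exact Or.inr (Or.inr (Or.inr (Or.inr (Or.inl h))))
  have hqS : q ∈ S := Or.inr (Or.inr (Or.inr (Or.inr (Or.inr rfl))))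
  have hα₁q : ∀ c ∈ α₁, q ≠ c ∧ ¬ G.Adj c q := by
    intro c hc
    rcases (hα₁m c).1 hc with h | rfl
    · exact low c (hαlow c h).1 (hαlow c h).2 q hqH hdq
    · exact ⟨lev _ _ hdp hdq, hpq⟩
  obtain ⟨β₂, hβ₂, hβ₂len, hβ₂m⟩ := hβ.snoc hp₂w₂ (by
    intro c hc hcp
    exact low c (hβlow c hc hcp).1 (hβlow c hc hcp).2 w₂ hw₂H hdw₂)
  have hβ₂S : ∀ c ∈ β₂, c ∈ S := by
    intro c hc
    rcases (hβ₂m c).1 hc with h | h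
    · exact hβS c h
    · exact Or.inr (Or.inr (Or.inr (Or.inr (Or.inl h))))
  have extS : ∀ l m : List V, (∀ c ∈ l, c ∈ S) → (∀ c, c ∈ m ↔ c ∈ l ∨ c = q) → ∀ c ∈ m, c ∈ S := by
    intro l m hl hm c hc
    rcases (hm c).1 hc with h | rfl
    · exact hl c h
    · exact hqS
  by_cases cw : G.Adj w q
  · obtain ⟨l, hl, hllen, hlm⟩ := hα₂.snoc cw (fun c hc hcw =>
      hα₁q c (((hα₂m c).1 hc).resolve_right hcw))
    by_cases cp : G.Adj p₂ q
    · obtain ⟨l', hl', hllen', hlm'⟩ := hβ.snoc cp (fun c hc hcp =>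
        low c (hβlow c hc hcp).1 (hβlow c hc hcp).2 q hqH hdq)
      exact suff l l' hl hl' (by omega) (extS _ _ hα₂S hlm) (extS _ _ hβS hlm')
    · obtain ⟨β₃, hβ₃, hβ₃len, hβ₃m⟩ := hβ₂.snoc hww₂.symm (by
        intro c hc hcw
        have hc' := ((hβ₂m c).1 hc).resolve_right hcw
        by_cases hcp : c = p₂
        · subst hcp
          exact ⟨lev _ _ hdp₂ hdw, hp₂w⟩
        · exact low c (hβlow c hc' hcp).1 (hβlow c hc' hcp).2 w hwH hdw)
      obtain ⟨l', hl', hllen', hlm'⟩ := hβ₃.snoc cw (by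
        intro c hc hcw
        rcases (hβ₂m c).1 (((hβ₃m c).1 hc).resolve_right hcw) with h | rfl
        · by_cases hcp : c = p₂
          · subst hcp
            exact ⟨lev _ _ hdp₂ hdq, cp⟩
          · exact low c (hβlow c h hcp).1 (hβlow c h hcp).2 q hqH hdq
        · exact ⟨hqw₂, fun h => hG.tri _ _ _ hww₂ h cw⟩)
      refine suff l l' hl hl' (by omega) (extS _ _ hα₂S hlm) (extS β₃ _ ?_ hlm')
      intro c hc
      rcases (hβ₃m c).1 hc with h | h
      · exact hβ₂S c h
      · exact Or.inr (Or.inr (Or.inr (Or.inl h)))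
  by_cases cw₂ : G.Adj w₂ q
  · obtain ⟨l, hl, hllen, hlm⟩ := hα₃.snoc cw₂ (by
      intro c hc hcw
      rcases (hα₂m c).1 (((hα₃m c).1 hc).resolve_right hcw) with h | rfl
      · exact hα₁q c h
      · exact ⟨hqw, cw⟩)
    obtain ⟨l', hl', hllen', hlm'⟩ := hβ₂.snoc cw₂ (by
      intro c hc hcw
      have hc' := ((hβ₂m c).1 hc).resolve_right hcw
      by_cases hcp : c = p₂
      · subst hcp
        exact ⟨lev _ _ hdp₂ hdq, fun h => hG.tri _ _ _ hp₂w₂ cw₂ h⟩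
      · exact low c (hβlow c hc' hcp).1 (hβlow c hc' hcp).2 q hqH hdq)
    exact suff l l' hl hl' (by omega) (extS _ _ hα₃S hlm) (extS _ _ hβ₂S hlm')
  have cp : G.Adj p₂ q := by
    rcases hqN with (h | h) | h
    · exact (cw h).elim
    · exact (cw₂ h).elim
    · exact h
  obtain ⟨l', hl', hllen', hlm'⟩ := hβ.snoc cp (fun c hc hcp =>
    low c (hβlow c hc hcp).1 (hβlow c hc hcp).2 q hqH hdq)
  by_cases cpp : G.Adj p p₂
  · obtain ⟨γ, hγ, hγlen, hγm⟩ := hα₁.snoc cpp (fun c hc hcp =>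
      hαp₂ c (((hα₁m c).1 hc).resolve_right hcp))
    obtain ⟨l, hl, hllen, hlm⟩ := hγ.snoc cp (fun c hc hcp =>
      hα₁q c (((hγm c).1 hc).resolve_right hcp))
    refine suff l l' hl hl' (by omega) (extS γ _ ?_ hlm) (extS _ _ hβS hlm')
    intro c hc
    rcases (hγm c).1 hc with h | h
    · exact hα₁S c h
    · exact Or.inr (Or.inr (Or.inl h))
  · obtain ⟨γ, hγ, hγlen, hγm⟩ := hα₃.snoc hp₂w₂.symm (by
      intro c hc hcw
      rcases (hα₂m c).1 (((hα₃m c).1 hc).resolve_right hcw) with h | rfl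
      · rcases (hα₁m c).1 h with h | rfl
        · exact hαp₂ c h
        · exact ⟨hpp₂, cpp⟩
      · exact ⟨(lev _ _ hdp₂ hdw).symm, fun h => hp₂w h.symm⟩)
    obtain ⟨l, hl, hllen, hlm⟩ := hγ.snoc cp (by
      intro c hc hcp
      rcases (hα₃m c).1 (((hγm c).1 hc).resolve_right hcp) with h | rfl
      · rcases (hα₂m c).1 h with h | rfl
        · exact hα₁q c h
        · exact ⟨hqw, cw⟩
      · exact ⟨hqw₂, cw₂⟩)
    refine suff l l' hl hl' (by omega) (extS γ _ ?_ hlm) (extS _ _ hβS hlm')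
    intro c hc
    rcases (hγm c).1 hc with h | h
    · exact hα₃S c h
    · exact Or.inr (Or.inr (Or.inl h))


/-! ### From second neighborhoods to the whole graph -/

lemma Levelling.conn_le {H : Set V} {x : V} {d : V → ℕ} (hd : Levelling G H x d) (i : ℕ) :
    Conn G {z | z ∈ H ∧ d z ≤ i} := by
  rintro P ⟨a, ha, hPa⟩ hP
  have h0 : ∀ n z, z ∈ H → d z = n → n ≤ i → (P z ↔ P x) := by
    intro n
    induction n with
    | zero =>
      intro z hz hdz _
      rw [hd.zero z hz hdz]
    | succ n ih =>
      intro z hz hdz hn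
      obtain ⟨p, hp, hpz, hdp⟩ := hd.parent z hz n hdz
      have hpU : p ∈ {z | z ∈ H ∧ d z ≤ i} := ⟨hp, by omega⟩
      have hzU : z ∈ {z | z ∈ H ∧ d z ≤ i} := ⟨hz, by omega⟩
      rw [← ih p hp hdp (by omega)]
      exact ⟨hP z hzU p hpU hpz.symm, hP p hpU z hzU hpz⟩
  intro b hb
  exact (h0 _ b hb.1 rfl hb.2).2 ((h0 _ a ha.1 rfl ha.2).1 hPa)

/-- The number of colors consumed by one switch, as in `Good.exists_switch`. -/
def cost (τ n : ℕ) : ℕ := 2 * (n + 3 + τ)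

/-- A bound for the chromatic number in terms of the bound `τ` for the sets `N2 G v`. -/
def bound (τ : ℕ) : ℕ := 2 * (cost τ (cost τ (cost τ (τ + τ + τ))) + 1)

/-- Three consecutive switches are placed in one level of a levelling of `G`. The lower levels and
the first and the third switch are pairwise anticomplete layers for the set `A` of parents of the
remaining set. -/
lemma Good.colS_univ [Finite V] (hG : Good G) {τ : ℕ} (hτ : ∀ v, ColS G (N2 G v) τ) :
    ColS G Set.univ (bound τ) := by
  by_contra hcon
  obtain ⟨C, -, hC, -, hCn⟩ := exists_component hcon
  obtain ⟨v, hv⟩ := ColS.nonempty_of_not hCn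
  obtain ⟨d, hd⟩ := exists_levelling hC hv
  obtain ⟨k, hk⟩ := hd.exists_level hCn
  have hk2 := hG.two_le_level hd (by omega) hk
  obtain ⟨i, rfl⟩ : ∃ i, k = i + 2 := ⟨k - 2, by omega⟩
  obtain ⟨H, hHM, hH, -, hHn⟩ := exists_component hk
  obtain ⟨h, hh⟩ := ColS.nonempty_of_not hHn
  obtain ⟨u', hu', hu'h, hdu'⟩ := hd.parent h (hHM hh).1 (i + 1) (hHM hh).2
  obtain ⟨K, hKs, hK, hKcl, hKn⟩ := exists_component (not_colS_diff hHn (hG.colS_nbr u'))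
  obtain ⟨x₀, hx₀H, hu'x₀, u₀, hu₀, hx₀u₀⟩ :=
    hH.attach hKs (ColS.nonempty_of_not hKn) hKcl hh hu'h
  obtain ⟨x₁, l₀, m₀, L₀, s₀, hn₀⟩ := hG.exists_switch hτ hK hu₀ hx₀u₀ hKn
  obtain ⟨u₁, hu₁, hx₁u₁⟩ := s₀.exit_adj
  obtain ⟨x₂, l₁, m₁, L₁, s₁, hn₁⟩ := hG.exists_switch hτ s₀.rest_conn hu₁ hx₁u₁ hn₀
  obtain ⟨u₂, hu₂, hx₂u₂⟩ := s₁.exit_adj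
  obtain ⟨x₃, l₂, m₂, L₂, s₂, hn₂⟩ := hG.exists_switch hτ s₁.rest_conn hu₂ hx₂u₂ hn₁
  have hKM : ∀ z ∈ K, z ∈ C ∧ d z = i + 2 := fun z hz => hHM (hKs hz).1
  have hL₀M : ∀ z ∈ L₀, z ∈ C ∧ d z = i + 2 := fun z hz => hKM z (s₀.rest_sub hz)
  have hL₁M : ∀ z ∈ L₁, z ∈ C ∧ d z = i + 2 := fun z hz => hL₀M z (s₁.rest_sub hz)
  have hL₂M : ∀ z ∈ L₂, z ∈ C ∧ d z = i + 2 := fun z hz => hL₁M z (s₂.rest_sub hz)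
  have hb₀ : ∀ c, c ∈ l₀ ∨ c ∈ m₀ → c ∈ C ∧ d c = i + 2 := fun c hc => by
    rcases s₀.sub c hc with rfl | h
    exacts [hHM hx₀H, hKM c h]
  have hb₁ : ∀ c, c ∈ l₁ ∨ c ∈ m₁ → c ∈ C ∧ d c = i + 2 := fun c hc => by
    rcases s₁.sub c hc with rfl | h
    exacts [hKM _ s₀.exit_mem, hL₀M c h]
  have hb₂ : ∀ c, c ∈ l₂ ∨ c ∈ m₂ → c ∈ C ∧ d c = i + 2 := fun c hc => by
    rcases s₂.sub c hc with rfl | h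
    exacts [hL₀M _ s₁.exit_mem, hL₁M c h]
  let A : Set V := {a | (a ∈ C ∧ d a = i + 1) ∧ ∃ c ∈ L₂, G.Adj a c}
  let U : Set V := {z | z ∈ C ∧ d z ≤ i}
  have hAlev : ∀ a ∈ A, ∀ c, d c = i + 2 → a ≠ c := by
    rintro a ⟨⟨-, h1⟩, -⟩ c hc rfl
    omega
  have hUlev : ∀ c ∈ U, ∀ e, e ∈ C ∧ d e = i + 2 → e ≠ c ∧ ¬ G.Adj c e := by
    rintro c ⟨hc, hdc⟩ e ⟨he, hde⟩
    refine ⟨?_, hd.not_adj hc he (by omega)⟩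
    rintro rfl
    omega
  have hAU : ∀ a ∈ A, a ∉ U := by
    rintro a ⟨⟨-, h1⟩, -⟩ ⟨-, h2⟩
    omega
  have hU : Conn G U := hd.conn_le i
  have hitU : ∀ a ∈ A, ∃ c ∈ U, G.Adj a c := by
    rintro a ⟨⟨h1, h2⟩, -⟩
    obtain ⟨p, hp, hpa, hdp⟩ := hd.parent a h1 i h2
    exact ⟨p, ⟨hp, by omega⟩, hpa.symm⟩
  have hu'K : ∀ e ∈ K, ¬ G.Adj u' e := fun e he => (hKs he).2
  have hLK : ∀ e ∈ L₂, e ∈ K := fun e he => s₀.rest_sub (s₁.rest_sub (s₂.rest_sub he))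
  -- The lower levels together with `u'` and `x₀` form a layer ending at the entrance `x₀`.
  have hit₀ : ∀ a ∈ A, ∃ c ∈ {c | c ∈ l₀ ∨ c ∈ m₀}, G.Adj a c := by
    intro a ha
    obtain ⟨c, hc, hac⟩ := hitU a ha
    obtain ⟨e, he, hae⟩ := ha.2
    obtain ⟨p, hp, hpu', hdp⟩ := hd.parent u' hu' i hdu'
    have hpU : p ∈ U := ⟨hp, by omega⟩
    have hB : Conn G (insert x₀ (insert u' U)) :=
      (hU.insert hpU hpu'.symm).insert (Or.inl rfl) hu'x₀.symm
    refine hG.hits_switch s₀ hB (Or.inl rfl) ?_ ?_ ?_ ?_ ⟨c, Or.inr (Or.inr hc), hac⟩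
      ⟨e, s₁.rest_sub (s₂.rest_sub he), hae⟩
    · rintro c (rfl | rfl | hc) hcx z hz
      · exact (hcx rfl).elim
      · refine ⟨?_, hu'K z hz⟩
        rintro rfl
        have := (hKM _ hz).2
        omega
      · exact hUlev c hc z (hKM z hz)
    · rintro (rfl | rfl | h)
      · exact hAlev _ ha _ (hHM hx₀H).2 rfl
      · exact hu'K e (hLK e he) hae
      · exact hAU a ha h
    · exact fun h => hAlev a ha a (hb₀ a h).2 rfl
    · exact fun h => hAlev a ha a (hL₀M a h).2 rfl
  have hit₁ : ∀ a ∈ A, ∃ c ∈ {c | c ∈ l₁ ∨ c ∈ m₁}, G.Adj a c := by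
    intro a ha
    obtain ⟨e, he, hae⟩ := ha.2
    exact hG.hits_switch s₁ s₀.conn (Or.inl s₀.path₁.right_mem) s₀.anti
      (fun h => hAlev a ha a (hb₀ a h).2 rfl) (fun h => hAlev a ha a (hb₁ a h).2 rfl)
      (fun h => hAlev a ha a (hL₁M a h).2 rfl) (hit₀ a ha) ⟨e, s₂.rest_sub he, hae⟩
  have hit₂ : ∀ a ∈ A, ∃ c ∈ {c | c ∈ l₂ ∨ c ∈ m₂}, G.Adj a c := by
    intro a ha
    exact hG.hits_switch s₂ s₁.conn (Or.inl s₁.path₁.right_mem) s₁.anti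
      (fun h => hAlev a ha a (hb₁ a h).2 rfl) (fun h => hAlev a ha a (hb₂ a h).2 rfl)
      (fun h => hAlev a ha a (hL₂M a h).2 rfl) (hit₁ a ha) ha.2
  have anti₀₂ : Anti G {c | c ∈ l₀ ∨ c ∈ m₀} {c | c ∈ l₂ ∨ c ∈ m₂} := by
    intro c hc e he
    have he' := s₂.sub e he
    by_cases hcx : c = x₁
    · subst hcx
      rcases he' with rfl | h
      · exact ⟨s₁.ne, s₁.not_adj⟩
      · exact s₁.anti c (Or.inl s₁.path₁.left_mem) s₁.ne.symm e h
    · refine s₀.anti c hc hcx e ?_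
      rcases he' with rfl | h
      exacts [s₁.exit_mem, s₁.rest_sub h]
  refine hn₂ (hG.colS_of_layers hτ (A := A) ⟨hU, hAU, hitU⟩
    ⟨s₀.conn, fun a ha h => hAlev a ha a (hb₀ a h).2 rfl, hit₀⟩
    ⟨s₂.conn, fun a ha h => hAlev a ha a (hb₂ a h).2 rfl, hit₂⟩
    (fun c hc e he => hUlev c hc e (hb₀ e he)) (fun c hc e he => hUlev c hc e (hb₂ e he))
    anti₀₂ ?_)
  intro z hz
  obtain ⟨p, hp, hpz, hdp⟩ := hd.parent z (hL₂M z hz).1 (i + 1) (hL₂M z hz).2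
  exact ⟨p, ⟨⟨hp, hdp⟩, z, hz, hpz⟩, hpz⟩

/-! ### Second neighborhoods contain no `5`-cycle -/

/-- The ends of a path of length two in `N2 G v` have a common neighbor that is adjacent to `v`:
otherwise the path and parents of its ends form an induced `6`-cycle through `v`. -/
lemma Good.common_parent (hG : Good G) {v x y z : V} (hx : x ∈ N2 G v) (hz : z ∈ N2 G v)
    (hxy : G.Adj x y) (hyz : G.Adj y z) (hy : y ∈ N2 G v) :
    ∃ c, G.Adj v c ∧ G.Adj c x ∧ G.Adj c z := by
  by_contra hcon
  push Not at hcon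
  obtain ⟨p, hvp, hpx⟩ := hx
  obtain ⟨q, hvq, hqz⟩ := hz
  obtain ⟨r, hvr, hry⟩ := hy
  have far : ∀ w c, G.Adj v c → G.Adj c w → ¬ G.Adj v w := fun w c h1 h2 h3 => hG.tri _ _ _ h1 h2 h3
  refine hG.no_C6 hvp hpx hxy hyz hqz.symm hvq.symm (far _ _ hvp hpx) ?_ ?_ ?_ ?_ ?_ (far _ _ hvr hry)
    (hcon p hvp hpx) ?_
  · exact fun h => hG.tri _ _ _ hpx hxy h
  · exact fun h => hG.tri _ _ _ hxy hyz h
  · exact fun h => hG.tri _ _ _ hyz hqz.symm h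
  · exact fun h => far _ _ hvq hqz h.symm
  · exact fun h => hG.tri _ _ _ hvq h hvp
  · exact fun h => hcon q hvq h.symm hqz

lemma Good.no_C5_N2 (hG : Good G) {v a b c d e : V} (ha : a ∈ N2 G v) (hb : b ∈ N2 G v)
    (hc : c ∈ N2 G v) (hd : d ∈ N2 G v) (he : e ∈ N2 G v) (hab : G.Adj a b) (hbc : G.Adj b c)
    (hcd : G.Adj c d) (hde : G.Adj d e) (hea : G.Adj e a) : False := by
  have far : ∀ w, w ∈ N2 G v → ¬ G.Adj v w := fun w ⟨c, h1, h2⟩ h3 => hG.tri _ _ _ h1 h2 h3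
  obtain ⟨p, hvp, hpe, hpb⟩ := hG.common_parent he hb hea hab ha
  obtain ⟨q, hvq, hqa, hqc⟩ := hG.common_parent ha hc hab hbc hb
  refine hG.no_C6 hvp hpe hde.symm hcd.symm hqc.symm hvq.symm (far _ he) ?_ ?_ ?_ ?_ ?_ (far _ hd)
    ?_ ?_
  · exact fun h => hG.tri _ _ _ hpe hde.symm h
  · exact fun h => hG.tri _ _ _ hde.symm hcd.symm h
  · exact fun h => hG.tri _ _ _ hcd.symm hqc.symm h
  · exact fun h => far _ hc h.symm
  · exact fun h => hG.tri _ _ _ hvq h hvp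
  · exact fun h => hG.tri _ _ _ hpb hbc h
  · exact fun h => hG.tri _ _ _ hea hqa.symm h

/-- Without `5`-cycles the sets `N2 G v` are stable, since an edge in `N2 G v` and parents of its
ends form a closed walk of length five. -/
lemma Good.colS_univ_of_no_C5 [Finite V] (hG : Good G)
    (h5 : ∀ a b c d e, G.Adj a b → G.Adj b c → G.Adj c d → G.Adj d e → G.Adj e a → False) :
    ColS G Set.univ (bound 1) :=
  hG.colS_univ fun _ => ColS.of_stable fun _ ⟨_, hvp, hpa⟩ _ ⟨_, hvq, hqb⟩ hab =>
    h5 _ _ _ _ _ hvp hpa hab hqb.symm hvq.symm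

lemma Good.induce (hG : Good G) (X : Set V) : Good (G.induce X) where
  tri a b c := hG.tri a b c
  hole n hn he := ⟨fun f => (hG.hole n hn he).false (f.trans (SimpleGraph.Embedding.induce X))⟩

lemma Good.colS_N2 [Finite V] (hG : Good G) (v : V) : ColS G (N2 G v) (bound 1) := by
  classical
  obtain ⟨f, hf⟩ := (hG.induce (N2 G v)).colS_univ_of_no_C5
    fun a b c d e => hG.no_C5_N2 a.2 b.2 c.2 d.2 e.2
  refine ⟨fun z => if h : z ∈ N2 G v then f ⟨z, h⟩ else 0, fun a ha => ?_⟩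
  obtain ⟨h1, h2⟩ := hf ⟨a, ha⟩ trivial
  refine ⟨by simpa only [ha, dif_pos] using h1, fun b hb hab => ?_⟩
  simpa only [ha, hb, dif_pos] using h2 ⟨b, hb⟩ trivial hab

lemma ColS.chi_le {n : ℕ} (h : ColS G Set.univ n) : chi G ≤ n := by
  obtain ⟨f, hf⟩ := h
  have hcol : G.Colorable n :=
    ⟨SimpleGraph.Coloring.mk (fun a => (⟨f a, (hf a trivial).1⟩ : Fin n)) fun {a b} hab h =>
      (hf a trivial).2 b trivial hab (congrArg Fin.val h)⟩
  exact ENat.toNat_le_of_le_natCast hcol.chromaticNumber_le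

end EvenHole

/-- There exists a constant `c` such that every graph with no triangle and
no induced cycle of even length at least 6 has chromatic number less than `c`. -/
theorem chi_bounded_no_triangle_no_long_even_hole :
    ∃ c : ℕ, ∀ (V : Type) [Fintype V] (G : SimpleGraph V),
      G.CliqueFree 3 →
      (∀ n : ℕ, 6 ≤ n → Even n → NoInducedCycle G n) →
      chi G < c := by
  refine ⟨EvenHole.bound (EvenHole.bound 1) + 1, fun V _ G hT hH => Nat.lt_succ_of_le ?_⟩
  classical
  have hG : EvenHole.Good G :=
    ⟨fun a b c hab hbc hac => hT {a, b, c} (SimpleGraph.is3Clique_triple_iff.2 ⟨hab, hac, hbc⟩), hH⟩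
  exact (hG.colS_univ hG.colS_N2).chi_le
end

section
/- There exists a constant c' such that every simple graph G containing no triangle, no induced cycle of length 5, and no induced cycle of even length at least 6 satisfies χ(G) < c'. -/
/-!
Without triangles and induced pentagons there is no closed walk of length `5` (`five`), so the
vertices having a parent adjacent to a fixed vertex form a stable set (`Col_second`). Colouring
the distance levels from a vertex of each component with two alternating palettes
(`Col_levels`), it suffices to bound the chromatic number of a component `K` of one level
(`core`). Let `N` be the previous level and `U` the union of the earlier ones; `U` is connected,
it is anticomplete to `K`, every vertex of `N` has a neighbour in `U`, and every vertex of `K`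
has a neighbour, its parent, in `N`.

The main tool is a *parity block* (`Blk`, `exists_block`). If `K` has large chromatic number and
`v` sees `K`, then some distance level inside `K`, from a neighbour `x` of `v`, still has large
chromatic number and contains an edge `z₁z₂`. Shortest paths from `x` to `z₁` and to `z₂`,
combined with this edge, give two induced paths of different parity from `x` to any vertex `t`
of the level seeing `z₁`, `z₂` or one of their predecessors. Here `t` can be chosen to be
attached to a component `H` of what remains of the level, again of large chromatic number.

Suppose that a vertex `p` sees `H` and is joined to `v` by a path avoiding `K` and its
neighbourhood. If `p` missed both paths of the block, then each of them, continued through `H`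
to `p` and back to `v`, would be a hole of length at least `6`, and one of these two holes would
be even. So `p` sees the block (`pass`).

Build a block `B₁` in `K` rooted at some `v ∈ N`, then a block `B₂` in its leftover set rooted
at a vertex `y` attached to `B₁`; let `H₂` be the leftover set of `B₂`. The vertices of `H₂`
with a parent adjacent to `v` or to `y` form two stable sets. The parents of all the others see
the three pairwise anticomplete connected sets `U`, `B₁`, `B₂`. For two such nonadjacent parents,
induced paths through two of these sets have the same parity and hence form an even hole, which
is a `4`-cycle: the parents have a common neighbour (`theta`). So all these parents are at
distance at most two from any fixed one of them, and by `five` the vertices below them split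
into three stable sets. Thus `H₂` is `5`-colourable. Undoing the two block constructions, `K` is
`49`-colourable and the graph is `98`-colourable.
-/

open SimpleGraph

section ChiBound
open Relation

variable {V : Type} {G : SimpleGraph V}

/-! ### Induced paths and holes -/

/-- The list `l` enumerates, in order, the vertices of an induced path of `G`: no repetitions,
and two entries are adjacent exactly when they are consecutive. -/
def IP (G : SimpleGraph V) : List V → Prop
  | [] => True
  | a :: l => IP G l ∧ ∀ c ∈ l, a ≠ c ∧ (G.Adj a c ↔ l.head? = some c)

lemma IP_append (l₁ l₂ : List V) : IP G (l₁ ++ l₂) ↔ IP G l₁ ∧ IP G l₂ ∧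
    ∀ a ∈ l₁, ∀ b ∈ l₂, a ≠ b ∧ (G.Adj a b ↔ l₁.getLast? = some a ∧ l₂.head? = some b) := by
  induction l₁ with
  | nil => simp [IP]
  | cons a l ih =>
    rw [List.cons_append, IP, IP, ih]
    rcases l with _ | ⟨b, l⟩
    · simp [IP]
    · have hl : (a :: b :: l).getLast? = (b :: l).getLast? := by simp [List.getLast?_cons]
      have hmem : ∀ c, (b :: l).getLast? = some c → c ∈ b :: l :=
        fun c hc => List.mem_of_getLast? hc
      rw [hl]
      constructor
      · rintro ⟨⟨h1, h2, h3⟩, h4⟩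
        refine ⟨⟨h1, fun c hc => ?_⟩, h2, ?_⟩
        · simpa using h4 c (List.mem_append_left _ hc)
        · intro c hc d hd
          rcases List.mem_cons.1 hc with rfl | hc
          · have h5 := h4 d (List.mem_append_right _ hd)
            refine ⟨h5.1, ?_⟩
            rw [h5.2]
            constructor
            · intro h
              simp at h
              exact absurd h (h3 b (by simp) d hd).1
            · rintro ⟨h, -⟩
              exact absurd rfl (h4 _ (List.mem_append_left _ (hmem _ h))).1
          · exact h3 c hc d hd
      · rintro ⟨⟨h1, h2⟩, h3, h4⟩
        refine ⟨⟨h1, h3, fun c hc => h4 c (List.mem_cons_of_mem _ hc)⟩, ?_⟩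
        intro c hc
        rcases List.mem_append.1 hc with hc | hc
        · simpa using h2 c hc
        · have h5 := h4 a (by simp) c hc
          refine ⟨h5.1, ?_⟩
          rw [h5.2]
          constructor
          · rintro ⟨h, -⟩
            exact absurd rfl (h2 _ (hmem _ h)).1
          · intro h
            simp at h
            exact absurd h (h4 b (by simp) c hc).1

lemma IP_reverse {l : List V} (h : IP G l) : IP G l.reverse := by
  induction l with
  | nil => simpa
  | cons a l ih =>
    rw [List.reverse_cons, IP_append]
    refine ⟨ih h.1, by simp [IP], ?_⟩
    intro c hc d hd
    have hd : d = a := by simpa using hd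
    subst hd
    have := h.2 c (by simpa using hc)
    refine ⟨this.1.symm, ?_⟩
    rw [G.adj_comm, this.2]
    simp

lemma IP_nodup {l : List V} (h : IP G l) : l.Nodup := by
  induction l with
  | nil => simp
  | cons a l ih =>
    rw [List.nodup_cons]
    exact ⟨fun hm => (h.2 a hm).1 rfl, ih h.1⟩

lemma IP_adj_lt {l : List V} (h : IP G l) (i j : ℕ) (hi : i < j) (hj : j < l.length) :
    G.Adj (l[i]'(hi.trans hj)) l[j] ↔ i + 1 = j := by
  induction l generalizing i j with
  | nil => simp at hj
  | cons a l ih =>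
    obtain ⟨j, rfl⟩ : ∃ k, j = k + 1 := ⟨j - 1, by omega⟩
    have hj' : j < l.length := by simpa using hj
    rcases i with _ | i
    · have h1 := (h.2 l[j] (List.getElem_mem _)).2
      simp only [List.getElem_cons_zero, List.getElem_cons_succ]
      rw [h1]
      have h0 : 0 < l.length := by omega
      rw [List.head?_eq_getElem?, List.getElem?_eq_getElem h0, Option.some_inj,
        (IP_nodup h.1).getElem_inj_iff]
      omega
    · simpa using ih h.1 i j (by omega) hj'

lemma IP_adj {l : List V} (h : IP G l) (i j : ℕ) (hi : i < l.length) (hj : j < l.length) :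
    G.Adj l[i] l[j] ↔ i + 1 = j ∨ j + 1 = i := by
  rcases lt_trichotomy i j with hij | rfl | hij
  · rw [IP_adj_lt h i j hij hj]; omega
  · simp
  · rw [G.adj_comm, IP_adj_lt h j i hij hi]; omega

/-- An induced path together with one further vertex, adjacent exactly to its two ends,
is an induced cycle. -/
lemma cycle_of_IP {l : List V} {a : V} (h : IP G l) (ha : a ∉ l)
    (hadj : ∀ c ∈ l, G.Adj a c ↔ l.head? = some c ∨ l.getLast? = some c) :
    Nonempty (cycleGraph (l.length + 1) ↪g G) := by
  have hnd := IP_nodup h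
  have hA : ∀ i (hi : i < l.length), G.Adj a l[i] ↔ i = 0 ∨ i + 1 = l.length := by
    intro i hi
    rw [hadj _ (List.getElem_mem _), List.head?_eq_getElem?, List.getLast?_eq_getElem?,
      List.getElem?_eq_getElem (show 0 < l.length by omega),
      List.getElem?_eq_getElem (show l.length - 1 < l.length by omega), Option.some_inj,
      Option.some_inj, hnd.getElem_inj_iff, hnd.getElem_inj_iff]
    omega
  let f : Fin (l.length + 1) → V := Fin.cons a (fun i => l[i])
  have hsub : ∀ i j : Fin (l.length + 1), (i - j).val = 1 ↔
      (i.val = j.val + 1 ∨ (j.val = l.length ∧ i.val = 0 ∧ 1 ≤ l.length)) := by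
    intro i j
    have hi := i.2
    have hj := j.2
    rw [Fin.sub_def]
    simp only
    by_cases hij : j.val ≤ i.val
    · rw [show l.length + 1 - j.val + i.val = (i.val - j.val) + (l.length + 1) by omega,
        Nat.add_mod_right, Nat.mod_eq_of_lt (by omega)]
      omega
    · rw [Nat.mod_eq_of_lt (by omega)]
      omega
  have hinj : Function.Injective f := by
    intro i j hij
    induction i using Fin.cases with
    | zero =>
      induction j using Fin.cases with
      | zero => rfl
      | succ j =>
        simp only [f, Fin.cons_zero, Fin.cons_succ] at hij
        exact absurd (hij ▸ List.getElem_mem _) ha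
    | succ i =>
      induction j using Fin.cases with
      | zero =>
        simp only [f, Fin.cons_zero, Fin.cons_succ] at hij
        exact absurd (hij ▸ List.getElem_mem _) ha
      | succ j =>
        simp only [f, Fin.cons_succ] at hij
        have := (hnd.getElem_inj_iff).1 hij
        exact congrArg _ (Fin.ext this)
  have hz : ((0 : Fin (l.length + 1)) : ℕ) = 0 := rfl
  refine ⟨⟨⟨f, hinj⟩, ?_⟩⟩
  intro i j
  change G.Adj (f i) (f j) ↔ _
  rw [cycleGraph_adj', hsub, hsub]
  induction i using Fin.cases with
  | zero =>
    induction j using Fin.cases with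
    | zero =>
      simp only [SimpleGraph.irrefl, hz, false_iff]
      omega
    | succ j =>
      simp only [f, Fin.cons_zero, Fin.cons_succ]
      have hj := j.2
      rw [Fin.getElem_fin, hA j hj]
      simp only [hz, Fin.val_succ, true_and]
      omega
  | succ i =>
    induction j using Fin.cases with
    | zero =>
      simp only [f, Fin.cons_zero, Fin.cons_succ]
      have hi := i.2
      rw [G.adj_comm, Fin.getElem_fin, hA i hi]
      simp only [hz, Fin.val_succ, true_and]
      omega
    | succ j =>
      simp only [f, Fin.cons_succ]
      rw [Fin.getElem_fin, Fin.getElem_fin, IP_adj h i j i.2 j.2]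
      simp only [Fin.val_succ]
      omega

/-- Every even hole of `G` has length `4`. -/
def NoLongEven (G : SimpleGraph V) : Prop :=
  ∀ n : ℕ, 6 ≤ n → Even n → NoInducedCycle G n

/-- Two induced paths with the same ends and anticomplete interiors `m₁`, `m₂` close up to
a hole of length `|m₁| + |m₂| + 2`, so if that number is even it equals `4`. -/
lemma hole (hG : NoLongEven G) {a b : V} {m₁ m₂ : List V} (h₁ : IP G (a :: (m₁ ++ [b])))
    (h₂ : IP G (a :: (m₂ ++ [b]))) (hm₁ : m₁ ≠ []) (hm₂ : m₂ ≠ [])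
    (hac : ∀ c ∈ m₁, ∀ d ∈ m₂, c ≠ d ∧ ¬ G.Adj c d) (hev : Even (m₁.length + m₂.length)) :
    m₁.length = 1 ∧ m₂.length = 1 := by
  have hl₁ := List.length_pos_iff.2 hm₁
  have hl₂ := List.length_pos_iff.2 hm₂
  by_contra hcon
  have hmb := (IP_append _ _).1 h₂.1
  have hhead₁ : (m₁ ++ [b]).head? = m₁.head? := by
    rcases m₁ with _ | ⟨x, m⟩
    · exact absurd rfl hm₁
    · simp
  have hhead₂ : (m₂ ++ [b]).head? = m₂.head? := by
    rcases m₂ with _ | ⟨x, m⟩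
    · exact absurd rfl hm₂
    · simp
  have hb₁ : ∀ c ∈ m₁, c ≠ b := fun c hc => (((IP_append _ _).1 h₁.1).2.2 c hc b (by simp)).1
  have hb₂ : ∀ c ∈ m₂, c ≠ b := fun c hc => (hmb.2.2 c hc b (by simp)).1
  have hIP : IP G ((m₁ ++ [b]) ++ m₂.reverse) := by
    rw [IP_append]
    refine ⟨h₁.1, IP_reverse hmb.1, ?_⟩
    intro c hc d hd
    have hd : d ∈ m₂ := by simpa using hd
    rcases List.mem_append.1 hc with hc | hc
    · refine ⟨(hac c hc d hd).1, ?_⟩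
      have := hb₁ c hc
      simp [(hac c hc d hd).2, this.symm]
    · have hc : c = b := by simpa using hc
      subst hc
      have := hmb.2.2 d hd c (by simp)
      refine ⟨this.1.symm, ?_⟩
      rw [G.adj_comm, this.2]
      simp
  have hcyc : Nonempty (cycleGraph (((m₁ ++ [b]) ++ m₂.reverse).length + 1) ↪g G) := by
    have hlast : ((m₁ ++ [b]) ++ m₂.reverse).getLast? = m₂.head? := by
      rcases m₂ with _ | ⟨x, m⟩
      · exact absurd rfl hm₂
      · rw [List.getLast?_append, List.getLast?_reverse]
        simp
    have hhead : ((m₁ ++ [b]) ++ m₂.reverse).head? = m₁.head? := by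
      rcases m₁ with _ | ⟨x, m⟩
      · exact absurd rfl hm₁
      · simp
    apply cycle_of_IP (a := a) hIP
    · intro h
      rcases List.mem_append.1 h with h | h
      · exact (h₁.2 a h).1 rfl
      · exact (h₂.2 a (by simp at h; simp [h])).1 rfl
    · intro c hc
      rw [hlast, hhead]
      have e₁ : m₁.head? = some c → c ∈ m₁ := List.mem_of_head?
      have e₂ : m₂.head? = some c → c ∈ m₂ := List.mem_of_head?
      rcases List.mem_append.1 hc with hc | hc
      · have h3 := (h₁.2 c hc).2
        rw [hhead₁] at h3
        rw [h3]
        constructor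
        · exact Or.inl
        · rintro (h | h)
          · exact h
          · exfalso
            rcases List.mem_append.1 hc with hc | hc
            · exact (hac c hc c (e₂ h)).1 rfl
            · exact hb₂ c (e₂ h) (by simpa using hc)
      · have hc : c ∈ m₂ := by simpa using hc
        have h3 := (h₂.2 c (by simp [hc])).2
        rw [hhead₂] at h3
        rw [h3]
        constructor
        · exact Or.inr
        · rintro (h | h)
          · exact absurd rfl (hac c (e₁ h) c hc).1
          · exact h
  obtain ⟨e⟩ := hcyc
  refine (hG _ ?_ ?_).false e
  · simp
    obtain ⟨k, hk⟩ := hev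
    omega
  · obtain ⟨k, hk⟩ := hev
    refine ⟨k + 1, ?_⟩
    simp
    omega

lemma tri (h3 : G.CliqueFree 3) {a b c : V} (hab : G.Adj a b) (hbc : G.Adj b c)
    (hac : G.Adj a c) : False := by
  classical
  exact h3 {a, b, c} (is3Clique_triple_iff.2 ⟨hab, hac, hbc⟩)

/-- Without triangles and induced pentagons there is no closed walk of length `5`. -/
lemma five (h3 : G.CliqueFree 3) (h5 : NoInducedCycle G 5) {a b c d e : V} (hab : G.Adj a b)
    (hbc : G.Adj b c) (hcd : G.Adj c d) (hde : G.Adj d e) (hea : G.Adj e a) : False := by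
  have t : ∀ {x y z : V}, G.Adj x y → G.Adj y z → ¬ G.Adj x z := fun h h' h'' => tri h3 h h' h''
  have hac := t hab hbc
  have hbd := t hbc hcd
  have hce := t hcd hde
  have hda := t hde hea
  have heb := t hea hab
  have nac : a ≠ c := by rintro rfl; exact hda hcd.symm
  have nbd : b ≠ d := by rintro rfl; exact heb hde.symm
  have nce : c ≠ e := by rintro rfl; exact hac hea.symm
  have nda : a ≠ d := by rintro rfl; exact hbd hab.symm
  have neb : b ≠ e := by rintro rfl; exact hce hbc.symm
  have hIP : IP G [b, c, d, e] := by
    simp only [IP]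
    simp [hbc.ne, hcd.ne, hde.ne, nbd, nce, neb, hbc, hcd, hde, hbd, hce, mt G.adj_symm heb]
  obtain ⟨f⟩ := cycle_of_IP (a := a) hIP
    (by simp [hab.ne, nac, nda, hea.ne.symm])
    (by
      intro x hx
      simp at hx
      rcases hx with rfl | rfl | rfl | rfl
      · simp [hab]
      · simp [hac, hbc.ne, nce.symm]
      · simp [mt G.adj_symm hda, nbd, hde.ne.symm]
      · simp [hea.symm])
  exact h5.false f

/-! ### Connected sets and induced paths through them -/

/-- `b` can be reached from `a` by a walk of `G` all of whose vertices lie in `S`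
(with `a` itself exempt if `a = b`). -/
def Rch (G : SimpleGraph V) (S : Set V) (a b : V) : Prop :=
  ReflTransGen (fun u v => G.Adj u v ∧ u ∈ S ∧ v ∈ S) a b

/-- `S` induces a connected (possibly empty) subgraph of `G`. -/
def Conn (G : SimpleGraph V) (S : Set V) : Prop := ∀ a ∈ S, ∀ b ∈ S, Rch G S a b

/-- `v` has a neighbour in `S`. -/
def HasNbr (G : SimpleGraph V) (v : V) (S : Set V) : Prop := ∃ s ∈ S, G.Adj v s

/-- `v` has no neighbour in `S`. -/
def NoNbr (G : SimpleGraph V) (v : V) (S : Set V) : Prop := ∀ s ∈ S, ¬ G.Adj v s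

lemma Rch.symm {S : Set V} {a b : V} (h : Rch G S a b) : Rch G S b a := by
  induction h with
  | refl => exact ReflTransGen.refl
  | tail _ h ih => exact ReflTransGen.head ⟨h.1.symm, h.2.2, h.2.1⟩ ih

lemma Rch.mono {S T : Set V} (hST : S ⊆ T) {a b : V} (h : Rch G S a b) : Rch G T a b := by
  induction h with
  | refl => exact ReflTransGen.refl
  | tail _ h ih => exact ih.tail ⟨h.1, hST h.2.1, hST h.2.2⟩

lemma Rch.single {S : Set V} {a b : V} (h : G.Adj a b) (ha : a ∈ S) (hb : b ∈ S) :
    Rch G S a b := ReflTransGen.single ⟨h, ha, hb⟩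

lemma conn_insert {S : Set V} (hS : Conn G S) {v : V} (hv : HasNbr G v S) :
    Conn G (insert v S) := by
  obtain ⟨s, hs, hvs⟩ := hv
  have key : ∀ a ∈ insert v S, Rch G (insert v S) a s := by
    rintro a (rfl | ha)
    · exact Rch.single hvs (by simp) (by simp [hs])
    · exact (hS a ha s hs).mono (Set.subset_insert _ _)
  exact fun a ha b hb => (key a ha).trans (key b hb).symm

/-- The component of `S` containing `u`. -/
def comp (G : SimpleGraph V) (S : Set V) (u : V) : Set V := {w | w ∈ S ∧ Rch G S u w}

lemma comp_conn (S : Set V) (u : V) : Conn G (comp G S u) := by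
  have key : ∀ w, Rch G S u w → w ∈ S → Rch G (comp G S u) u w := by
    intro w h
    induction h with
    | refl => intro _; exact ReflTransGen.refl
    | tail h1 h ih =>
      intro _
      exact (ih h.2.1).trans
        (Rch.single h.1 ⟨h.2.1, h1⟩ ⟨h.2.2, h1.tail h⟩)
  intro a ha b hb
  exact (key a ha.2 ha.1).symm.trans (key b hb.2 hb.1)

lemma comp_closed {S : Set V} {u a b : V} (ha : a ∈ comp G S u) (hb : b ∈ S)
    (hab : G.Adj a b) : b ∈ comp G S u :=
  ⟨hb, ha.2.tail ⟨hab, ha.1, hb⟩⟩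

/-- If `a` lies on or sees an induced path, then `a` is joined to the end of that path by an
induced path: jump from `a` to its last neighbour. -/
lemma cons_path {l : List V} {a b : V} (h : IP G l) (hb : l.getLast? = some b)
    (ha : ∃ c ∈ l, c = a ∨ G.Adj a c) :
    ∃ l', IP G l' ∧ l'.head? = some a ∧ l'.getLast? = some b ∧ ∀ c ∈ l', c = a ∨ c ∈ l := by
  induction l with
  | nil => simp at hb
  | cons d l ih =>
    by_cases h' : ∃ c ∈ l, c = a ∨ G.Adj a c
    · have hl : l.getLast? = some b := by
        rcases l with _ | ⟨e, l⟩
        · simp at h'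
        · simpa [List.getLast?_cons] using hb
      obtain ⟨l', h1, h2, h3, h4⟩ := ih h.1 hl h'
      exact ⟨l', h1, h2, h3, fun c hc => (h4 c hc).imp id (List.mem_cons_of_mem _)⟩
    · push Not at h'
      obtain ⟨c, hc, hca⟩ := ha
      have hcd : c = d := by
        rcases List.mem_cons.1 hc with hc | hc
        · exact hc
        · exact absurd hca (not_or.2 (h' c hc))
      subst hcd
      by_cases hca' : c = a
      · subst hca'
        exact ⟨c :: l, h, rfl, hb, fun x hx => Or.inr hx⟩
      · have had : G.Adj a c := hca.resolve_left hca'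
        refine ⟨a :: c :: l, ⟨h, ?_⟩, rfl, by simpa [List.getLast?_cons] using hb,
          fun x hx => by simpa using hx⟩
        intro x hx
        rcases List.mem_cons.1 hx with rfl | hx
        · exact ⟨Ne.symm hca', by simp [had]⟩
        · refine ⟨(h' x hx).1.symm, ?_⟩
          simp [(h' x hx).2, (h.2 x hx).1]

lemma exists_path {S : Set V} {a b : V} (h : Rch G S a b) (hb : b ∈ S) :
    ∃ l, IP G l ∧ l.head? = some a ∧ l.getLast? = some b ∧ ∀ c ∈ l, c ∈ S := by
  induction h using ReflTransGen.head_induction_on with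
  | refl => exact ⟨[b], by simp [IP], rfl, rfl, by simp [hb]⟩
  | @head a c h h' ih =>
    obtain ⟨l, h1, h2, h3, h4⟩ := ih
    obtain ⟨l', k1, k2, k3, k4⟩ := cons_path (a := a) h1 h3
      ⟨c, List.mem_of_head? h2, Or.inr h.1⟩
    refine ⟨l', k1, k2, k3, fun x hx => ?_⟩
    rcases k4 x hx with rfl | hx
    · exact h.2.1
    · exact h4 x hx

/-- Two nonadjacent vertices with neighbours in a connected set are joined by an induced path
with interior in that set. -/
lemma path_via {S : Set V} (hS : Conn G S) {p q : V} (hpq : p ≠ q)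
    (hadj : ¬ G.Adj p q) (hp : HasNbr G p S) (hq : HasNbr G q S) :
    ∃ m : List V, m ≠ [] ∧ (∀ c ∈ m, c ∈ S) ∧ IP G (p :: (m ++ [q])) := by
  have hq' : HasNbr G q (insert p S) := hq.imp fun s hs => ⟨Or.inr hs.1, hs.2⟩
  have hC := conn_insert (conn_insert hS hp) hq'
  obtain ⟨l, h1, h2, h3, h4⟩ := exists_path (hC p (by simp) q (by simp)) (by simp)
  obtain ⟨l, rfl⟩ : ∃ l', l = p :: l' := by
    rcases l with _ | ⟨a, l⟩
    · simp at h2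
    · exact ⟨l, by simpa using h2⟩
  rcases List.eq_nil_or_concat l with rfl | ⟨m, b, rfl⟩
  · exact absurd (by simpa using h3) hpq
  · rw [List.concat_eq_append] at *
    have hb : b = q := by
      rw [← List.cons_append, List.getLast?_append] at h3
      simpa using h3
    subst hb
    refine ⟨m, ?_, ?_, h1⟩
    · rintro rfl
      exact hadj ((h1.2 b (by simp)).2.2 (by simp))
    · intro c hc
      rcases h4 c (by simp [hc]) with h | h | h
      · exact absurd h (((IP_append _ _).1 h1.1).2.2 c hc b (by simp)).1
      · exact absurd h.symm (h1.2 c (by simp [hc])).1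
      · exact h

lemma IP_rch {x : V} {l : List V} (h : IP G (x :: l)) : ∀ b ∈ x :: l,
    Rch G {c | c ∈ x :: l} x b := by
  induction l generalizing x with
  | nil => intro b hb; simp at hb; subst hb; exact ReflTransGen.refl
  | cons y l ih =>
    intro b hb
    rcases List.mem_cons.1 hb with rfl | hb
    · exact ReflTransGen.refl
    · exact (Rch.single ((h.2 y (by simp)).2.2 rfl) (by simp) (by simp)).trans
        ((ih h.1 b hb).mono (fun c hc => List.mem_cons_of_mem _ hc))

lemma IP_union_conn {x : V} {l₁ l₂ : List V} (h₁ : IP G l₁) (h₂ : IP G l₂)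
    (hx₁ : l₁.head? = some x) (hx₂ : l₂.head? = some x) :
    Conn G {c | c ∈ l₁ ∨ c ∈ l₂} := by
  have key : ∀ {l : List V}, IP G l → l.head? = some x → ∀ b ∈ l, Rch G {c | c ∈ l} x b := by
    intro l h hx
    rcases l with _ | ⟨a, l⟩
    · simp at hx
    · have : a = x := by simpa using hx
      subst this
      exact IP_rch h
  have key2 : ∀ b, b ∈ l₁ ∨ b ∈ l₂ → Rch G {c | c ∈ l₁ ∨ c ∈ l₂} x b := by
    rintro b (hb | hb)
    · exact (key h₁ hx₁ b hb).mono (fun c hc => Or.inl hc)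
    · exact (key h₂ hx₂ b hb).mono (fun c hc => Or.inr hc)
  exact fun a ha b hb => (key2 a ha).symm.trans (key2 b hb)

/-! ### Colouring sets of vertices -/

/-- The subgraph of `G` induced by `S` is `n`-colourable. The colouring is a function on all
vertices, so that colourings of different sets combine without subtypes. -/
def Col (G : SimpleGraph V) (S : Set V) (n : ℕ) : Prop :=
  ∃ f : V → ℕ, (∀ u ∈ S, f u < n) ∧ ∀ u ∈ S, ∀ w ∈ S, G.Adj u w → f u ≠ f w

lemma Col.mono {S T : Set V} {n m : ℕ} (h : Col G T n) (hST : S ⊆ T) (hnm : n ≤ m) :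
    Col G S m := by
  obtain ⟨f, h1, h2⟩ := h
  exact ⟨f, fun u hu => (h1 u (hST hu)).trans_le hnm,
    fun u hu w hw => h2 u (hST hu) w (hST hw)⟩

lemma Col.union {S T : Set V} {n m : ℕ} (hS : Col G S n) (hT : Col G T m) :
    Col G (S ∪ T) (n + m) := by
  classical
  obtain ⟨f, hf, hf'⟩ := hS
  obtain ⟨g, hg, hg'⟩ := hT
  refine ⟨fun u => if u ∈ S then f u else n + g u, ?_, ?_⟩
  · rintro u hu
    by_cases hS : u ∈ S
    · simp only [hS, if_true]; have := hf u hS; omega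
    · simp only [hS, if_false]; have := hg u (hu.resolve_left hS); omega
  · intro u hu w hw huw
    by_cases h1 : u ∈ S <;> by_cases h2 : w ∈ S <;> simp only [h1, h2, if_true, if_false]
    · exact hf' u h1 w h2 huw
    · have := hf u h1; omega
    · have := hf w h2; omega
    · have := hg' u (hu.resolve_left h1) w (hw.resolve_left h2) huw; omega

lemma Col_stable {S : Set V} (h : ∀ u ∈ S, ∀ w ∈ S, ¬ G.Adj u w) : Col G S 1 :=
  ⟨fun _ => 0, fun _ _ => by simp, fun u hu w hw huw => absurd huw (h u hu w hw)⟩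

lemma not_Col_diff {S X : Set V} {n m : ℕ} (h : ¬ Col G S (n + m)) (hX : Col G (S ∩ X) m) :
    ¬ Col G (S \ X) n := by
  intro h'
  refine h ((h'.union hX).mono ?_ le_rfl)
  rw [Set.sdiff_union_inter]

/-- Colour the levels of a levelling with two alternating palettes. -/
lemma Col_levels {S : Set V} {n : ℕ} (d : V → ℕ)
    (hd : ∀ u ∈ S, ∀ w ∈ S, G.Adj u w → d w ≤ d u + 1)
    (h : ∀ i, Col G {u | u ∈ S ∧ d u = i} n) : Col G S (2 * n) := by
  choose f hf hf' using h
  refine ⟨fun u => f (d u) u + n * (d u % 2), ?_, ?_⟩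
  · intro u hu
    have h1 := hf (d u) u ⟨hu, rfl⟩
    rcases Nat.mod_two_eq_zero_or_one (d u) with h2 | h2 <;> simp only [h2] <;> omega
  · intro u hu w hw huw
    have h1 := hd u hu w hw huw
    have h2 := hd w hw u hu huw.symm
    have h3 := hf (d u) u ⟨hu, rfl⟩
    have h4 := hf (d w) w ⟨hw, rfl⟩
    by_cases he : d u = d w
    · have := hf' (d u) u ⟨hu, rfl⟩ w ⟨hw, he.symm⟩ huw
      simp only [← he]
      omega
    · rcases Nat.mod_two_eq_zero_or_one (d u) with h5 | h5 <;>
      rcases Nat.mod_two_eq_zero_or_one (d w) with h6 | h6 <;> simp only [h5, h6] <;> omega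

/-- Some component of a set is as hard to colour as the set itself. -/
lemma exists_comp {S : Set V} {n : ℕ} (h : ¬ Col G S n) :
    ∃ u ∈ S, ¬ Col G (comp G S u) n := by
  by_contra hcon
  push Not at hcon
  have hcon : ∀ C : Set V, (∃ u ∈ S, C = comp G S u) → Col G C n := by
    rintro C ⟨u, hu, rfl⟩
    exact hcon u hu
  choose! f hf hf' using hcon
  have hself : ∀ u ∈ S, u ∈ comp G S u := fun u hu => ⟨hu, ReflTransGen.refl⟩
  refine h ⟨fun u => f (comp G S u) u, fun u hu => hf _ ⟨u, hu, rfl⟩ u (hself u hu), ?_⟩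
  intro u hu w hw huw
  have he : comp G S w = comp G S u := by
    have huw' : Rch G S u w := Rch.single huw hu hw
    ext x
    exact ⟨fun hx => ⟨hx.1, huw'.trans hx.2⟩, fun hx => ⟨hx.1, huw'.symm.trans hx.2⟩⟩
  simp only [he]
  exact hf' _ ⟨u, hu, rfl⟩ u (hself u hu) w (he ▸ hself w hw) huw

lemma Col_empty {S : Set V} (h : S = ∅) (n : ℕ) : Col G S n := by
  subst h; exact ⟨fun _ => 0, by simp, by simp⟩

/-- Deleting a set `X` meeting a connected set `K` leaves components attached to `X`. -/
lemma attach {K X : Set V} (hK : Conn G K) {x u : V} (hx : x ∈ K ∩ X) (hu : u ∈ K \ X) :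
    ∃ t ∈ K ∩ X, HasNbr G t (comp G (K \ X) u) := by
  have key : ∀ w, Rch G K u w → w ∈ comp G (K \ X) u ∨
      ∃ t ∈ K ∩ X, HasNbr G t (comp G (K \ X) u) := by
    intro w h
    induction h with
    | refl => exact Or.inl ⟨hu, ReflTransGen.refl⟩
    | @tail b c _ h ih =>
      rcases ih with ih | ih
      · by_cases hc : c ∈ X
        · exact Or.inr ⟨c, ⟨h.2.2, hc⟩, b, ih, h.1.symm⟩
        · exact Or.inl (comp_closed ih ⟨h.2.2, hc⟩ h.1)
      · exact Or.inr ih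
  rcases key x (hK u hu.1 x hx.1) with h | h
  · exact absurd hx.2 h.1.2
  · exact h

/-! ### Distance levels -/

/-- There is a walk of length `n` from `v` to `w` all of whose later vertices lie in `K`. -/
def Wk (G : SimpleGraph V) (K : Set V) (v : V) : ℕ → V → Prop
  | 0, w => w = v
  | n + 1, w => w ∈ K ∧ ∃ u, Wk G K v n u ∧ G.Adj u w

/-- The distance function `d` from a vertex `v` of a connected set `K`. -/
lemma exists_dist {K : Set V} (hK : Conn G K) {v : V} (hv : v ∈ K) :
    ∃ d : V → ℕ, d v = 0 ∧ (∀ w ∈ K, d w = 0 → w = v) ∧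
      (∀ u ∈ K, ∀ w ∈ K, G.Adj u w → d w ≤ d u + 1) ∧
      (∀ w ∈ K, ∀ n, d w = n + 1 → ∃ u ∈ K, G.Adj u w ∧ d u = n) := by
  have hex : ∀ w ∈ K, ∃ n, Wk G K v n w := by
    intro w hw
    have h := hK v hv w hw
    clear hw
    induction h with
    | refl => exact ⟨0, rfl⟩
    | tail _ h ih => exact ih.imp' Nat.succ fun n hn => ⟨h.2.2, _, hn, h.1⟩
  have hmem : ∀ n w, Wk G K v n w → w ∈ K := by
    rintro (_ | n) w h
    · exact (show w = v from h) ▸ hv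
    · exact h.1
  let d : V → ℕ := fun w => sInf {n | Wk G K v n w}
  have hd : ∀ w ∈ K, Wk G K v (d w) w := fun w hw => Nat.sInf_mem (hex w hw)
  have hle : ∀ w n, Wk G K v n w → d w ≤ n := fun w n h => Nat.sInf_le h
  have hstep : ∀ u ∈ K, ∀ w ∈ K, G.Adj u w → d w ≤ d u + 1 :=
    fun u hu w hw h => hle w _ ⟨hw, u, hd u hu, h⟩
  refine ⟨d, Nat.le_zero.1 (hle v 0 rfl), ?_, hstep, ?_⟩
  · intro w hw h
    have := hd w hw
    rwa [h] at this
  · intro w hw n h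
    have h1 := hd w hw
    rw [h] at h1
    obtain ⟨-, u, h2, h3⟩ := h1
    have hu := hmem _ _ h2
    have h4 := hle u n h2
    have h5 := hstep u hu w hw h3
    exact ⟨u, hu, h3, by omega⟩

/-- A shortest path from `x` to `w`. The last conjunct records that a vertex of it one level
above `w` is the predecessor of `w`. -/
lemma geodesic {K : Set V} {x : V} {d : V → ℕ} (hx : ∀ w ∈ K, d w = 0 → w = x)
    (hstep : ∀ u ∈ K, ∀ w ∈ K, G.Adj u w → d w ≤ d u + 1)
    (hpar : ∀ w ∈ K, ∀ n, d w = n + 1 → ∃ u ∈ K, G.Adj u w ∧ d u = n) (n : ℕ) :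
    ∀ w ∈ K, d w = n → ∃ l, IP G (l ++ [w]) ∧ l.length = n ∧ (l ++ [w]).head? = some x ∧
      (∀ a ∈ l, a ∈ K ∧ d a < n ∧ (d a + 1 = n → G.Adj a w)) := by
  induction n with
  | zero =>
    intro w hw h
    exact ⟨[], by simp [IP], rfl, by simp [hx w hw h], by simp⟩
  | succ n ih =>
    intro w hw h
    obtain ⟨u, hu, huw, hdu⟩ := hpar w hw n h
    obtain ⟨l, h1, h2, h3, h4⟩ := ih u hu hdu
    refine ⟨l ++ [u], ?_, by simp [h2], ?_, ?_⟩
    · rw [IP_append]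
      refine ⟨h1, by simp [IP], ?_⟩
      intro a ha b hb
      have hb : b = w := by simpa using hb
      subst hb
      rcases List.mem_append.1 ha with ha' | ha'
      · obtain ⟨k1, k2, -⟩ := h4 a ha'
        refine ⟨by rintro rfl; omega, ?_⟩
        have hau : a ≠ u := by rintro rfl; omega
        have hab : ¬ G.Adj a b := fun hab => by
          have := hstep a k1 b hw hab
          omega
        simp [hab, Ne.symm hau]
      · have : a = u := by simpa using ha'
        subst this
        exact ⟨huw.ne, by simp [huw]⟩
    · rw [List.head?_append, h3]; rfl
    · intro a ha
      rcases List.mem_append.1 ha with ha' | ha'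
      · obtain ⟨k1, k2, -⟩ := h4 a ha'
        exact ⟨k1, by omega, by omega⟩
      · have : a = u := by simpa using ha'
        subst this
        exact ⟨hu, by omega, fun _ => huw⟩

/-! ### Parity blocks -/

/-- Two induced paths from `x` to `t` inside `S` whose numbers of vertices have different
parity. -/
def TwoPaths (G : SimpleGraph V) (x t : V) (S : Set V) (β₁ β₂ : List V) : Prop :=
  (IP G β₁ ∧ β₁.head? = some x ∧ β₁.getLast? = some t ∧ ∀ b ∈ β₁, b ∈ S) ∧
  (IP G β₂ ∧ β₂.head? = some x ∧ β₂.getLast? = some t ∧ ∀ b ∈ β₂, b ∈ S) ∧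
  ¬ Even (β₁.length + β₂.length)

/-- An edge `z₁z₂` inside a distance level `L`, with parents `y₁`, `y₂` and shortest paths
`P₁ ++ [y₁]`, `P₂ ++ [y₂]` from the root `x`; all these vertices lie in `S`. -/
structure Cfg (G : SimpleGraph V) (x : V) (L S : Set V) (P₁ P₂ : List V)
    (y₁ y₂ z₁ z₂ : V) : Prop where
  ip₁ : IP G (P₁ ++ [y₁])
  ip₂ : IP G (P₂ ++ [y₂])
  len : P₁.length = P₂.length
  head₁ : (P₁ ++ [y₁]).head? = some x
  head₂ : (P₂ ++ [y₂]).head? = some x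
  low₁ : ∀ a ∈ P₁, ∀ w ∈ L, a ≠ w ∧ ¬ G.Adj a w
  low₂ : ∀ a ∈ P₂, ∀ w ∈ L, a ≠ w ∧ ¬ G.Adj a w
  ne₁ : ∀ a ∈ P₁, a ≠ y₂
  ne₂ : ∀ a ∈ P₂, a ≠ y₁
  adj₁ : ∀ a ∈ P₁, G.Adj a y₂ → G.Adj a y₁
  adj₂ : ∀ a ∈ P₂, G.Adj a y₁ → G.Adj a y₂
  yL₁ : y₁ ∉ L
  yL₂ : y₂ ∉ L
  zL₁ : z₁ ∈ L
  zL₂ : z₂ ∈ L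
  yz₁ : G.Adj y₁ z₁
  yz₂ : G.Adj y₂ z₂
  zz : G.Adj z₁ z₂
  S₁ : ∀ a ∈ P₁, a ∈ S
  S₂ : ∀ a ∈ P₂, a ∈ S
  Sy₁ : y₁ ∈ S
  Sy₂ : y₂ ∈ S
  Sz₁ : z₁ ∈ S
  Sz₂ : z₂ ∈ S

lemma Cfg.symm {x : V} {L S : Set V} {P₁ P₂ : List V} {y₁ y₂ z₁ z₂ : V}
    (c : Cfg G x L S P₁ P₂ y₁ y₂ z₁ z₂) : Cfg G x L S P₂ P₁ y₂ y₁ z₂ z₁ :=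
  ⟨c.ip₂, c.ip₁, c.len.symm, c.head₂, c.head₁, c.low₂, c.low₁, c.ne₂, c.ne₁, c.adj₂, c.adj₁,
    c.yL₂, c.yL₁, c.zL₂, c.zL₁, c.yz₂, c.yz₁, c.zz.symm, c.S₂, c.S₁, c.Sy₂, c.Sy₁, c.Sz₂, c.Sz₁⟩

lemma IP_glue {P l : List V} {y : V} (h₁ : IP G (P ++ [y])) (h₂ : IP G (y :: l))
    (h : ∀ a ∈ P, ∀ b ∈ l, a ≠ b ∧ ¬ G.Adj a b) : IP G (P ++ (y :: l)) := by
  rw [IP_append] at h₁ ⊢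
  refine ⟨h₁.1, h₂, ?_⟩
  intro a ha b hb
  rcases List.mem_cons.1 hb with rfl | hb
  · simpa using h₁.2.2 a ha b (by simp)
  · refine ⟨(h a ha b hb).1, ?_⟩
    simp [(h a ha b hb).2, (h₂.2 b hb).1]

lemma glue_path {x t y : V} {S : Set V} {P l : List V} (h₁ : IP G (P ++ [y]))
    (h₂ : IP G (y :: l))
    (h : ∀ a ∈ P, ∀ b ∈ l, a ≠ b ∧ ¬ G.Adj a b) (hx : (P ++ [y]).head? = some x)
    (ht : l.getLast? = some t) (hP : ∀ a ∈ P, a ∈ S) (hl : ∀ a ∈ y :: l, a ∈ S) :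
    IP G (P ++ (y :: l)) ∧ (P ++ (y :: l)).head? = some x ∧
      (P ++ (y :: l)).getLast? = some t ∧ ∀ b ∈ P ++ (y :: l), b ∈ S := by
  refine ⟨IP_glue h₁ h₂ h, ?_, ?_, ?_⟩
  · rw [← hx]; rcases P with _ | ⟨p, P⟩ <;> simp
  · simp [List.getLast?_cons, ht]
  · intro b hb
    rcases List.mem_append.1 hb with hb | hb
    · exact hP b hb
    · exact hl b hb

/-- When `t` sees `z₁`, one path runs through `y₁, z₁`; the other one ends in `y₂, t` or in
`y₂, z₂, z₁, t`, depending on whether `t` sees `y₂`. -/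
lemma Cfg.caseA (h3 : G.CliqueFree 3) {x t : V} {L S : Set V} {P₁ P₂ : List V}
    {y₁ y₂ z₁ z₂ : V} (c : Cfg G x L S P₁ P₂ y₁ y₂ z₁ z₂) (htL : t ∈ L) (htS : t ∈ S)
    (ht : G.Adj z₁ t) : ∃ β₁ β₂, TwoPaths G x t S β₁ β₂ := by
  have n₁ : ¬ G.Adj y₁ t := fun h => tri h3 c.yz₁ ht h
  have n₂ : ¬ G.Adj z₂ t := fun h => tri h3 c.zz h ht
  have n₃ : ¬ G.Adj y₂ z₁ := fun h => tri h3 h c.zz c.yz₂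
  have e₁ : y₁ ≠ t := fun h => c.yL₁ (h ▸ htL)
  have e₂ : y₂ ≠ t := fun h => c.yL₂ (h ▸ htL)
  have e₃ : y₂ ≠ z₁ := fun h => c.yL₂ (h ▸ c.zL₁)
  have hβ₁ := glue_path (l := [z₁, t]) (t := t) c.ip₁
    (by simp [IP, c.yz₁.ne, c.yz₁, ht, ht.ne, n₁, e₁, ht.ne])
    (by
      intro a ha b hb
      simp at hb
      rcases hb with rfl | rfl
      · exact c.low₁ a ha _ c.zL₁
      · exact c.low₁ a ha _ htL) c.head₁ rfl c.S₁
    (by simp [c.Sy₁, c.Sz₁, htS])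
  by_cases hy : G.Adj y₂ t
  · have hβ₂ := glue_path (l := [t]) (t := t) c.ip₂
      (by simp [IP, hy, hy.ne])
      (by
        intro a ha b hb
        simp at hb
        subst hb
        exact c.low₂ a ha _ htL) c.head₂ rfl c.S₂ (by simp [c.Sy₂, htS])
    refine ⟨_, _, hβ₁, hβ₂, ?_⟩
    simp only [List.length_append, List.length_cons, List.length_nil, c.len]
    rintro ⟨k, hk⟩; omega
  · have e₄ : z₂ ≠ t := by rintro rfl; exact hy c.yz₂
    have hβ₂ := glue_path (l := [z₂, z₁, t]) (t := t) c.ip₂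
      (by simp [IP, c.yz₂.ne, c.yz₂, ht, ht.ne, hy, n₂, n₃, e₂, e₃, e₄, c.zz.symm, c.zz.ne.symm,
        c.zz.ne, Ne.symm e₃])
      (by
        intro a ha b hb
        simp at hb
        rcases hb with rfl | rfl | rfl
        · exact c.low₂ a ha _ c.zL₂
        · exact c.low₂ a ha _ c.zL₁
        · exact c.low₂ a ha _ htL) c.head₂ rfl c.S₂
      (by simp [c.Sy₂, c.Sz₁, c.Sz₂, htS])
    refine ⟨_, _, hβ₁, hβ₂, ?_⟩
    simp only [List.length_append, List.length_cons, List.length_nil, c.len]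
    rintro ⟨k, hk⟩; omega

/-- When `t` sees `y₂` but neither `z₁` nor `z₂`, one path ends in `y₂, t`; the other one starts
along `P₁, y₁` and reaches `y₂` directly if `y₁` and `y₂` are adjacent, and through `z₁, z₂`
otherwise. -/
lemma Cfg.caseB (h3 : G.CliqueFree 3) (h5 : NoInducedCycle G 5) {x t : V} {L S : Set V}
    {P₁ P₂ : List V} {y₁ y₂ z₁ z₂ : V} (c : Cfg G x L S P₁ P₂ y₁ y₂ z₁ z₂) (htL : t ∈ L)
    (htS : t ∈ S) (ht : G.Adj y₂ t) (hz₁ : ¬ G.Adj z₁ t) (hz₂ : ¬ G.Adj z₂ t) :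
    ∃ β₁ β₂, TwoPaths G x t S β₁ β₂ := by
  have n₁ : ¬ G.Adj y₁ t := fun h => five h3 h5 c.yz₁ c.zz c.yz₂.symm ht h.symm
  have n₃ : ¬ G.Adj z₁ y₂ := fun h => tri h3 h.symm c.zz c.yz₂
  have n₄ : ¬ G.Adj y₁ z₂ := fun h => tri h3 c.yz₁ c.zz h
  have e₁ : y₁ ≠ t := fun h => c.yL₁ (h ▸ htL)
  have e₃ : z₁ ≠ y₂ := fun h => c.yL₂ (h ▸ c.zL₁)
  have e₄ : y₁ ≠ z₂ := fun h => c.yL₁ (h ▸ c.zL₂)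
  have e₅ : z₁ ≠ t := by rintro rfl; exact hz₂ c.zz.symm
  have e₆ : z₂ ≠ t := by rintro rfl; exact hz₁ c.zz
  have e₇ : y₁ ≠ y₂ := by rintro rfl; exact n₁ ht
  have hβ₁ := glue_path (l := [t]) (t := t) c.ip₂
    (by simp [IP, ht, ht.ne])
    (by
      intro a ha b hb
      simp at hb
      subst hb
      exact c.low₂ a ha _ htL) c.head₂ rfl c.S₂ (by simp [c.Sy₂, htS])
  by_cases hy : G.Adj y₁ y₂
  · have hβ₂ := glue_path (l := [y₂, t]) (t := t) c.ip₁
      (by simp [IP, hy, e₇, e₁, n₁, ht, ht.ne])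
      (by
        intro a ha b hb
        simp at hb
        rcases hb with rfl | rfl
        · exact ⟨c.ne₁ a ha, fun h => tri h3 (c.adj₁ a ha h) hy h⟩
        · exact c.low₁ a ha _ htL) c.head₁ rfl c.S₁
      (by simp [c.Sy₁, c.Sy₂, htS])
    refine ⟨_, _, hβ₁, hβ₂, ?_⟩
    simp only [List.length_append, List.length_cons, List.length_nil, c.len]
    rintro ⟨k, hk⟩; omega
  · have hβ₂ := glue_path (l := [z₁, z₂, y₂, t]) (t := t) c.ip₁
      (by simp [IP, hy, e₇, e₁, n₁, ht, ht.ne, c.yz₁, c.yz₁.ne, c.zz, c.zz.ne, c.yz₂.symm,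
        c.yz₂.ne.symm, n₃, n₄, e₃, e₄, e₅, e₆, hz₁, hz₂, Ne.symm e₃, Ne.symm e₇])
      (by
        intro a ha b hb
        simp at hb
        rcases hb with rfl | rfl | rfl | rfl
        · exact c.low₁ a ha _ c.zL₁
        · exact c.low₁ a ha _ c.zL₂
        · exact ⟨c.ne₁ a ha, fun h =>
            five h3 h5 (c.adj₁ a ha h) c.yz₁ c.zz c.yz₂.symm h.symm⟩
        · exact c.low₁ a ha _ htL) c.head₁ rfl c.S₁
      (by simp [c.Sy₁, c.Sy₂, c.Sz₁, c.Sz₂, htS])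
    refine ⟨_, _, hβ₁, hβ₂, ?_⟩
    simp only [List.length_append, List.length_cons, List.length_nil, c.len]
    rintro ⟨k, hk⟩; omega

/-- Any vertex `t` of the level seeing one of `y₁, y₂, z₁, z₂` is the end of two paths of
different parity. -/
lemma Cfg.twoPaths (h3 : G.CliqueFree 3) (h5 : NoInducedCycle G 5) {x t : V} {L S : Set V}
    {P₁ P₂ : List V} {y₁ y₂ z₁ z₂ : V} (c : Cfg G x L S P₁ P₂ y₁ y₂ z₁ z₂) (htL : t ∈ L)
    (htS : t ∈ S) (ht : G.Adj y₁ t ∨ G.Adj y₂ t ∨ G.Adj z₁ t ∨ G.Adj z₂ t) :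
    ∃ β₁ β₂, TwoPaths G x t S β₁ β₂ := by
  by_cases hz₁ : G.Adj z₁ t
  · exact c.caseA h3 htL htS hz₁
  by_cases hz₂ : G.Adj z₂ t
  · exact c.symm.caseA h3 htL htS hz₂
  rcases ht with h | h | h | h
  · exact c.symm.caseB h3 h5 htL htS h hz₂ hz₁
  · exact c.caseB h3 h5 htL htS h hz₁ hz₂
  · exact absurd h hz₁
  · exact absurd h hz₂

/-- A parity block inside `K`, rooted at a vertex `v`: two induced paths of different parity
from `x` to `t`, where `x` is the only neighbour of `v` on them, and a connected leftover set
`H`, attached to the paths only at `t` and missing the neighbourhood of `v`. -/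
structure Blk (G : SimpleGraph V) (K : Set V) (v x t : V) (β₁ β₂ : List V) (H : Set V) :
    Prop where
  two : TwoPaths G x t K β₁ β₂
  away : ∀ b, b ∈ β₁ ∨ b ∈ β₂ → b ∉ H ∧ (G.Adj v b → b = x) ∧ (b ≠ t → NoNbr G b H)
  hvx : G.Adj v x
  hvH : NoNbr G v H
  htH : HasNbr G t H
  sub : H ⊆ K
  conn : Conn G H

lemma Col_nbr (h3 : G.CliqueFree 3) (S : Set V) (v : V) : Col G (S ∩ {w | G.Adj v w}) 1 :=
  Col_stable fun _ hu _ hw huw => tri h3 hu.2 huw hw.2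

/-- Next to `v`, deleting the neighbours of `v` from `K` leaves a component `C` that is still
hard to colour and is attached to a neighbour `x` of `v`. -/
lemma step (h3 : G.CliqueFree 3) {K : Set V} {v : V} {n : ℕ} (hK : Conn G K)
    (hv : HasNbr G v K) (hcol : ¬ Col G K (n + 1)) :
    ∃ x ∈ K, ∃ C ⊆ K, G.Adj v x ∧ Conn G C ∧ ¬ Col G C n ∧ NoNbr G v C ∧ HasNbr G x C ∧
      x ∉ C := by
  obtain ⟨u, hu, hC⟩ := exists_comp (not_Col_diff hcol (Col_nbr h3 K v))
  obtain ⟨s, hs, hvs⟩ := hv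
  obtain ⟨x, hx, hxC⟩ := attach hK (x := s) ⟨hs, hvs⟩ hu
  exact ⟨x, hx.1, _, fun c hc => hc.1.1, hx.2, comp_conn _ _, hC, fun c hc h => hc.1.2 h, hxC,
    fun h => h.1.2 hx.2⟩

/-- A set of large chromatic number next to `v` contains a parity block rooted at `v` whose
leftover set still has large chromatic number. -/
lemma exists_block (h3 : G.CliqueFree 3) (h5 : NoInducedCycle G 5) {K : Set V} {v : V} {M : ℕ}
    (hK : Conn G K) (hv : HasNbr G v K) (hcol : ¬ Col G K (2 * (M + 4) + 1)) :
    ∃ x t β₁ β₂ H, Blk G K v x t β₁ β₂ H ∧ ¬ Col G H M := by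
  obtain ⟨x, hxK, C, hCK, hvx, hC, hCcol, hvC, hxC, hx⟩ := step h3 hK hv hcol
  have hW : Conn G (insert x C) := conn_insert hC hxC
  obtain ⟨d, hd0, hdx, hstep, hpar⟩ := exists_dist hW (v := x) (by simp)
  have hlev : ∃ j, ¬ Col G {u | u ∈ insert x C ∧ d u = j} (M + 4) := by
    by_contra hcon
    push Not at hcon
    exact hCcol ((Col_levels d hstep hcon).mono (Set.subset_insert _ _) le_rfl)
  obtain ⟨j, hj⟩ := hlev
  have hj0 : j ≠ 0 := by
    rintro rfl
    refine hj ((Col_stable ?_).mono subset_rfl (by omega : 1 ≤ M + 4))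
    intro u hu w hw huw
    rw [hdx u hu.1 hu.2, hdx w hw.1 hw.2] at huw
    exact huw.ne rfl
  obtain ⟨n, rfl⟩ := Nat.exists_eq_succ_of_ne_zero hj0
  obtain ⟨u₀, -, hKcol⟩ := exists_comp hj
  have hKconn := comp_conn (G := G) {u | u ∈ insert x C ∧ d u = n.succ} u₀
  set K₂ := comp G {u | u ∈ insert x C ∧ d u = n.succ} u₀ with hK₂
  have hK₂W : ∀ w ∈ K₂, w ∈ insert x C := fun w hw => hw.1.1
  have hK₂d : ∀ w ∈ K₂, d w = n + 1 := fun w hw => hw.1.2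
  have hedge : ∃ z₁ ∈ K₂, ∃ z₂ ∈ K₂, G.Adj z₁ z₂ := by
    by_contra hcon
    push Not at hcon
    exact hKcol ((Col_stable hcon).mono subset_rfl (by omega))
  obtain ⟨z₁, hz₁, z₂, hz₂, hzz⟩ := hedge
  obtain ⟨y₁, hy₁, hyz₁, hdy₁⟩ := hpar z₁ (hK₂W _ hz₁) n (hK₂d _ hz₁)
  obtain ⟨y₂, hy₂, hyz₂, hdy₂⟩ := hpar z₂ (hK₂W _ hz₂) n (hK₂d _ hz₂)
  obtain ⟨P₁, hP₁, hl₁, hh₁, hm₁⟩ := geodesic hdx hstep hpar n y₁ hy₁ hdy₁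
  obtain ⟨P₂, hP₂, hl₂, hh₂, hm₂⟩ := geodesic hdx hstep hpar n y₂ hy₂ hdy₂
  let X : Set V := {w | G.Adj y₁ w} ∪ {w | G.Adj y₂ w} ∪ {w | G.Adj z₁ w} ∪ {w | G.Adj z₂ w}
  have hXcol : Col G (K₂ ∩ X) 4 := by
    refine (((((Col_nbr h3 K₂ y₁).union (Col_nbr h3 K₂ y₂)).union (Col_nbr h3 K₂ z₁)).union
      (Col_nbr h3 K₂ z₂))).mono ?_ le_rfl
    rw [← Set.inter_union_distrib_left, ← Set.inter_union_distrib_left,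
      ← Set.inter_union_distrib_left]
  obtain ⟨u, hu, hHcol⟩ := exists_comp (not_Col_diff hKcol hXcol)
  obtain ⟨t, ht, htH⟩ := attach hKconn (x := z₂) ⟨hz₂, Or.inl (Or.inr hzz)⟩ hu
  set H := comp G (K₂ \ X) u with hH
  let S : Set V := {b | b ∈ P₁ ∨ b ∈ P₂ ∨ b = y₁ ∨ b = y₂ ∨ b = z₁ ∨ b = z₂ ∨ b = t}
  have hlow : ∀ P : List V, (∀ a ∈ P, a ∈ insert x C ∧ d a < n) → ∀ a ∈ P, ∀ w ∈ K₂,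
      a ≠ w ∧ ¬ G.Adj a w := by
    intro P hP a ha w hw
    have h1 := hP a ha
    have h2 := hK₂d w hw
    refine ⟨by rintro rfl; omega, fun h => ?_⟩
    have := hstep a h1.1 w (hK₂W w hw) h
    omega
  have hlow₁ := hlow P₁ fun a ha => ⟨(hm₁ a ha).1, (hm₁ a ha).2.1⟩
  have hlow₂ := hlow P₂ fun a ha => ⟨(hm₂ a ha).1, (hm₂ a ha).2.1⟩
  have hcfg : Cfg G x K₂ S P₁ P₂ y₁ y₂ z₁ z₂ :=
    { ip₁ := hP₁, ip₂ := hP₂, len := hl₁.trans hl₂.symm, head₁ := hh₁, head₂ := hh₂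
      low₁ := hlow₁, low₂ := hlow₂
      ne₁ := by rintro a ha rfl; have := (hm₁ a ha).2.1; omega
      ne₂ := by rintro a ha rfl; have := (hm₂ a ha).2.1; omega
      adj₁ := by
        intro a ha h
        obtain ⟨k1, k2, k3⟩ := hm₁ a ha
        have := hstep a k1 y₂ hy₂ h
        exact k3 (by omega)
      adj₂ := by
        intro a ha h
        obtain ⟨k1, k2, k3⟩ := hm₂ a ha
        have := hstep a k1 y₁ hy₁ h
        exact k3 (by omega)
      yL₁ := fun h => by have := hK₂d _ h; omega
      yL₂ := fun h => by have := hK₂d _ h; omega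
      zL₁ := hz₁, zL₂ := hz₂, yz₁ := hyz₁, yz₂ := hyz₂, zz := hzz
      S₁ := fun a ha => Or.inl ha
      S₂ := fun a ha => Or.inr (Or.inl ha)
      Sy₁ := by simp [S], Sy₂ := by simp [S], Sz₁ := by simp [S], Sz₂ := by simp [S] }
  obtain ⟨β₁, β₂, ⟨i1, i2, i3, i4⟩, ⟨j1, j2, j3, j4⟩, hpar'⟩ :=
    hcfg.twoPaths h3 h5 ht.1 (by simp [S]) (by
      rcases ht.2 with ((h | h) | h) | h
      · exact Or.inl h
      · exact Or.inr (Or.inl h)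
      · exact Or.inr (Or.inr (Or.inl h))
      · exact Or.inr (Or.inr (Or.inr h)))
  have hWK : insert x C ⊆ K := Set.insert_subset hxK hCK
  have hSW : ∀ b ∈ S, b ∈ insert x C := by
    rintro b (h | h | rfl | rfl | rfl | rfl | rfl)
    · exact (hm₁ b h).1
    · exact (hm₂ b h).1
    · exact hy₁
    · exact hy₂
    · exact hK₂W _ hz₁
    · exact hK₂W _ hz₂
    · exact hK₂W _ ht.1
  have hHK₂ : ∀ w ∈ H, w ∈ K₂ := fun w hw => hw.1.1
  have hHX : ∀ w ∈ H, w ∉ X := fun w hw => hw.1.2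
  have hnoNbr : ∀ b ∈ S, b ≠ t → NoNbr G b H := by
    rintro b (h | h | rfl | rfl | rfl | rfl | rfl) hbt w hw hbw
    · exact (hlow₁ b h w (hHK₂ w hw)).2 hbw
    · exact (hlow₂ b h w (hHK₂ w hw)).2 hbw
    · exact hHX w hw (Or.inl (Or.inl (Or.inl hbw)))
    · exact hHX w hw (Or.inl (Or.inl (Or.inr hbw)))
    · exact hHX w hw (Or.inl (Or.inr hbw))
    · exact hHX w hw (Or.inr hbw)
    · exact hbt rfl
  have hnotH : ∀ b ∈ S, b ∉ H := by
    rintro b (h | h | rfl | rfl | rfl | rfl | rfl) hbH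
    · exact (hlow₁ b h b (hHK₂ b hbH)).1 rfl
    · exact (hlow₂ b h b (hHK₂ b hbH)).1 rfl
    · exact hcfg.yL₁ (hHK₂ b hbH)
    · exact hcfg.yL₂ (hHK₂ b hbH)
    · exact hHX b hbH (Or.inr hzz.symm)
    · exact hHX b hbH (Or.inl (Or.inr hzz))
    · exact hHX b hbH ht.2
  refine ⟨x, t, β₁, β₂, H, ⟨⟨⟨i1, i2, i3, fun b hb => hWK (hSW b (i4 b hb))⟩,
    ⟨j1, j2, j3, fun b hb => hWK (hSW b (j4 b hb))⟩, hpar'⟩, ?_, hvx, ?_, htH, ?_,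
    comp_conn _ _⟩, hHcol⟩
  · intro b hb
    have hbS : b ∈ S := hb.elim (i4 b) (j4 b)
    refine ⟨hnotH b hbS, fun hvb => ?_, hnoNbr b hbS⟩
    rcases hSW b hbS with h | h
    · exact h
    · exact absurd hvb (hvC b h)
  · intro w hw
    rcases hK₂W w (hHK₂ w hw) with h | h
    · have := hK₂d w (hHK₂ w hw)
      rw [h, hd0] at this
      omega
    · exact hvC w h
  · exact fun w hw => hWK (hK₂W w (hHK₂ w hw))

/-! ### Closing up blocks to holes -/

/-- The vertex set of the two paths of a block. -/
def bset (β₁ β₂ : List V) : Set V := {c | c ∈ β₁ ∨ c ∈ β₂}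

/-- The holes behind `pass`: if `p` misses the path `β` of a block, then `β` followed by a path
`r` through the leftover set joins `v` to `p`, and the return path `mu` outside the block closes
it up to a hole of length at least `6`, which must be odd. -/
lemma pass_aux (hG : NoLongEven G) {v p x t : V} {β mu r : List V}
    (hβ : IP G β) (hhead : β.head? = some x) (hlast : β.getLast? = some t)
    (hvx : G.Adj v x) (hvβ : ∀ b ∈ β, v ≠ b ∧ (G.Adj v b → b = x))
    (hpβ : ∀ b ∈ β, p ≠ b ∧ ¬ G.Adj p b)
    (hr : r ≠ []) (hrt : IP G (t :: (r ++ [p]))) (hvr : ∀ b ∈ r, v ≠ b ∧ ¬ G.Adj v b)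
    (hβr : ∀ b ∈ β, ∀ c ∈ r, b ≠ c ∧ (b ≠ t → ¬ G.Adj b c))
    (hvp : v ≠ p) (hnvp : ¬ G.Adj v p)
    (hmu : mu ≠ []) (hmuI : IP G (v :: (mu ++ [p])))
    (hmuβ : ∀ c ∈ mu, ∀ b, b ∈ β ∨ b ∈ r → c ≠ b ∧ ¬ G.Adj c b) :
    ¬ Even (β.length + r.length + mu.length) := by
  intro hev
  have hxβ : x ∈ β := List.mem_of_head? hhead
  have htβ : t ∈ β := List.mem_of_getLast? hlast
  have hIP : IP G (v :: ((β ++ r) ++ [p])) := by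
    refine ⟨?_, ?_⟩
    · rw [List.append_assoc, IP_append]
      refine ⟨hβ, hrt.1, ?_⟩
      intro a ha b hb
      by_cases hat : a = t
      · subst hat
        have := hrt.2 b hb
        exact ⟨this.1, by rw [this.2]; simp [hlast]⟩
      · have hne : ¬ some t = some a := fun h => hat (Option.some_inj.1 h).symm
        rw [hlast]
        rcases List.mem_append.1 hb with hb | hb
        · exact ⟨(hβr a ha b hb).1, by simp [(hβr a ha b hb).2 hat, Ne.symm hat]⟩
        · have : b = p := by simpa using hb
          subst this
          exact ⟨(hpβ a ha).1.symm, by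
            simp [mt G.adj_symm (hpβ a ha).2, Ne.symm hat]⟩
    · have hh : ((β ++ r) ++ [p]).head? = some x := by
        rw [List.append_assoc, List.head?_append, hhead]; rfl
      intro c hc
      rw [hh]
      rcases List.mem_append.1 hc with hc | hc
      · rcases List.mem_append.1 hc with hc | hc
        · refine ⟨(hvβ c hc).1, fun h => by rw [(hvβ c hc).2 h], fun h => ?_⟩
          rw [← Option.some_inj.1 h]; exact hvx
        · refine ⟨(hvr c hc).1, fun h => absurd h (hvr c hc).2, fun h => ?_⟩
          rw [← Option.some_inj.1 h]; exact hvx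
      · have : c = p := by simpa using hc
        subst this
        refine ⟨hvp, fun h => absurd h hnvp, fun h => ?_⟩
        rw [← Option.some_inj.1 h]; exact hvx
  have hne : β ++ r ≠ [] := by simp [hr]
  have := (hole hG hIP hmuI hne hmu (by
    intro c hc d hd
    have := hmuβ d hd c (List.mem_append.1 hc)
    exact ⟨this.1.symm, mt G.adj_symm this.2⟩) (by rwa [List.length_append])).1
  rw [List.length_append] at this
  have h1 := List.length_pos_iff.2 hr
  have h2 := List.length_pos_of_mem hxβ
  omega

/-- If `v` and `p` are joined outside a block rooted at `v` and `p` sees the leftover set,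
then `p` sees the block: otherwise one of the two parities would close up to a long even
hole. -/
lemma pass (hG : NoLongEven G) {K U H : Set V} {v p x t : V} {β₁ β₂ : List V}
    (hb : Blk G K v x t β₁ β₂ H) (hU : Conn G U) (hvU : HasNbr G v U) (hpU : HasNbr G p U)
    (hUK : ∀ c ∈ U, c ∉ K ∧ NoNbr G c K) (hvK : v ∉ K) (hpK : p ∉ K) (hvp : v ≠ p)
    (hnvp : ¬ G.Adj v p) (hpH : HasNbr G p H) : HasNbr G p (bset β₁ β₂) := by
  by_contra hcon
  have hno : ∀ b, b ∈ β₁ ∨ b ∈ β₂ → ¬ G.Adj p b := fun b hb h => hcon ⟨b, hb, h⟩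
  obtain ⟨⟨⟨i1, i2, i3, i4⟩, ⟨j1, j2, j3, j4⟩, hpar⟩, haway, hvx, hvH, htH, hHK, hH⟩ := hb
  have htβ : t ∈ β₁ := List.mem_of_getLast? i3
  obtain ⟨r, hr, hrH, hrI⟩ := path_via hH (p := t) (q := p) (by rintro rfl; exact hpK (i4 _ htβ))
    (fun h => hno t (Or.inl htβ) h.symm) htH hpH
  obtain ⟨mu, hmu, hmuU, hmuI⟩ := path_via hU hvp hnvp hvU hpU
  have key : ∀ β : List V, (∀ b ∈ β, b ∈ β₁ ∨ b ∈ β₂) → (∀ b ∈ β, b ∈ K) → IP G β →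
      β.head? = some x → β.getLast? = some t →
      ¬ Even (β.length + r.length + mu.length) := by
    intro β hβ hβK hβI hβh hβl
    refine pass_aux hG hβI hβh hβl hvx ?_ ?_ hr hrI ?_ ?_ hvp hnvp hmu hmuI ?_
    · exact fun b hb => ⟨fun h => hvK (h ▸ hβK b hb), (haway b (hβ b hb)).2.1⟩
    · exact fun b hb => ⟨fun h => hpK (h ▸ hβK b hb), hno b (hβ b hb)⟩
    · exact fun b hb => ⟨fun h => hvK (h ▸ hHK (hrH b hb)), hvH b (hrH b hb)⟩
    · exact fun b hb c hc => ⟨fun h => (haway b (hβ b hb)).1 (h ▸ hrH c hc),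
        fun hbt => (haway b (hβ b hb)).2.2 hbt c (hrH c hc)⟩
    · intro c hc b hb
      have hbK : b ∈ K := hb.elim (hβK b) (fun h => hHK (hrH b h))
      have h1 := hUK c (hmuU c hc)
      exact ⟨fun h => h1.1 (h ▸ hbK), h1.2 b hbK⟩
  have k1 := key β₁ (fun b hb => Or.inl hb) i4 i1 i2 i3
  have k2 := key β₂ (fun b hb => Or.inr hb) j4 j1 j2 j3
  rw [Nat.not_even_iff] at k1 k2 hpar
  omega

/-- Among three pairwise anticomplete connected sets, two give paths between `p` and `q` of the
same parity; the resulting even hole is a 4-cycle, so `p` and `q` have a common neighbour. -/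
lemma theta (hG : NoLongEven G) {A B C : Set V} {p q : V} (hA : Conn G A) (hB : Conn G B)
    (hC : Conn G C) (hAB : ∀ a ∈ A, ∀ b ∈ B, a ≠ b ∧ ¬ G.Adj a b)
    (hAC : ∀ a ∈ A, ∀ b ∈ C, a ≠ b ∧ ¬ G.Adj a b)
    (hBC : ∀ a ∈ B, ∀ b ∈ C, a ≠ b ∧ ¬ G.Adj a b)
    (hpA : HasNbr G p A) (hpB : HasNbr G p B) (hpC : HasNbr G p C)
    (hqA : HasNbr G q A) (hqB : HasNbr G q B) (hqC : HasNbr G q C)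
    (hpq : p ≠ q) (hn : ¬ G.Adj p q) : ∃ c, G.Adj p c ∧ G.Adj c q := by
  obtain ⟨m₁, h1, h2, h3⟩ := path_via hA hpq hn hpA hqA
  obtain ⟨m₂, k1, k2, k3⟩ := path_via hB hpq hn hpB hqB
  obtain ⟨m₃, l1, l2, l3⟩ := path_via hC hpq hn hpC hqC
  have done : ∀ m : List V, IP G (p :: (m ++ [q])) → m.length = 1 →
      ∃ c, G.Adj p c ∧ G.Adj c q := by
    intro m hm hl
    obtain ⟨c, rfl⟩ := List.length_eq_one_iff.1 hl
    exact ⟨c, (hm.2 c (by simp)).2.2 (by simp), (hm.1.2 q (by simp)).2.2 (by simp)⟩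
  by_cases e1 : Even (m₁.length + m₂.length)
  · exact done m₁ h3 (hole hG h3 k3 h1 k1
      (fun c hc d hd => hAB c (h2 c hc) d (k2 d hd)) e1).1
  by_cases e2 : Even (m₁.length + m₃.length)
  · exact done m₁ h3 (hole hG h3 l3 h1 l1
      (fun c hc d hd => hAC c (h2 c hc) d (l2 d hd)) e2).1
  by_cases e3 : Even (m₂.length + m₃.length)
  · exact done m₂ k3 (hole hG k3 l3 k1 l1
      (fun c hc d hd => hBC c (k2 c hc) d (l2 d hd)) e3).1
  rw [Nat.not_even_iff] at e1 e2 e3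
  omega

/-! ### Bounding the chromatic number -/

/-- If every `h ∈ S` has a parent `π h` adjacent to one fixed vertex `w`, then `S` is stable:
an edge of `S` would give a closed walk of length `5` through `w`. -/
lemma Col_second (h3 : G.CliqueFree 3) (h5 : NoInducedCycle G 5) (π : V → V) (w : V)
    {S : Set V} (hS : ∀ h ∈ S, G.Adj h (π h) ∧ G.Adj (π h) w) : Col G S 1 :=
  Col_stable fun a ha b hb hab =>
    five h3 h5 (hS a ha).1 (hS a ha).2 (hS b hb).2.symm (hS b hb).1.symm hab.symm

/-- A connected set `K`, anticomplete to a connected set `U` and dominated by a set `N` all of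
whose vertices see `U`, has bounded chromatic number. -/
lemma core (hG : NoLongEven G) (h3 : G.CliqueFree 3) (h5 : NoInducedCycle G 5)
    {U N K : Set V} (hU : Conn G U) (hK : Conn G K) (hUK : ∀ c ∈ U, c ∉ K ∧ NoNbr G c K)
    (hN : ∀ p ∈ N, p ∉ K ∧ HasNbr G p U) (hdom : ∀ h ∈ K, ∃ p ∈ N, G.Adj h p) :
    Col G K 49 := by
  -- `49 = 2 * (20 + 4) + 1` makes room for a first block with leftover set `H₁` not
  -- `20`-colourable; then `19 = 2 * (5 + 4) + 1` for a second block inside `H₁`, whose leftover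
  -- set `H₂` is not `5`-colourable.
  by_contra hcol
  choose! π hπN hπ using hdom
  have hne : ∃ h, h ∈ K := by
    by_contra hcon
    exact hcol (Col_empty (Set.eq_empty_iff_forall_notMem.2 fun h hh => hcon ⟨h, hh⟩) _)
  obtain ⟨h₀, hh₀⟩ := hne
  obtain ⟨v, hvN, hv⟩ : ∃ v ∈ N, G.Adj h₀ v := ⟨π h₀, hπN _ hh₀, hπ _ hh₀⟩
  obtain ⟨x₁, t₁, β₁, β₂, H₁, hb₁, hcol₁⟩ :=
    exists_block h3 h5 (M := 20) hK ⟨h₀, hh₀, hv.symm⟩ hcol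
  have ht₁ : t₁ ∈ bset β₁ β₂ := Or.inl (List.mem_of_getLast? hb₁.two.1.2.2.1)
  obtain ⟨y, hyH₁, C, hCH₁, hty, hC, hCcol, htC, hyC, hyC'⟩ :=
    step h3 hb₁.conn hb₁.htH hcol₁
  obtain ⟨x₂, t₂, γ₁, γ₂, H₂, hb₂, hcol₂⟩ := exists_block h3 h5 (M := 5) hC hyC hCcol
  have hB₁conn : Conn G (bset β₁ β₂) :=
    IP_union_conn hb₁.two.1.1 hb₁.two.2.1.1 hb₁.two.1.2.1 hb₁.two.2.1.2.1
  have hB₂conn : Conn G (bset γ₁ γ₂) :=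
    IP_union_conn hb₂.two.1.1 hb₂.two.2.1.1 hb₂.two.1.2.1 hb₂.two.2.1.2.1
  have hB₁K : ∀ b ∈ bset β₁ β₂, b ∈ K :=
    fun b hb => hb.elim (hb₁.two.1.2.2.2 b) (hb₁.two.2.1.2.2.2 b)
  have hB₂C : ∀ b ∈ bset γ₁ γ₂, b ∈ C :=
    fun b hb => hb.elim (hb₂.two.1.2.2.2 b) (hb₂.two.2.1.2.2.2 b)
  have hCK : C ⊆ K := hCH₁.trans hb₁.sub
  have hB₁C : ∀ b ∈ bset β₁ β₂, b ∉ C ∧ NoNbr G b C := by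
    intro b hb
    have h := hb₁.away b hb
    refine ⟨fun hbC => h.1 (hCH₁ hbC), ?_⟩
    by_cases hbt : b = t₁
    · rw [hbt]; exact htC
    · exact fun c hc => h.2.2 hbt c (hCH₁ hc)
  have hH₂C : H₂ ⊆ C := hb₂.sub
  have hH₂K : ∀ h ∈ H₂, h ∈ K := fun h hh => hCK (hH₂C hh)
  -- Parents adjacent neither to `v` nor to `y` see `U` and both blocks.
  have hpar : ∀ h ∈ H₂, ¬ G.Adj (π h) v → ¬ G.Adj (π h) y →
      HasNbr G (π h) U ∧ HasNbr G (π h) (bset β₁ β₂) ∧ HasNbr G (π h) (bset γ₁ γ₂) := by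
    intro h hh hpv hpy
    have hhK := hH₂K h hh
    have hpN := hN _ (hπN h hhK)
    have hph : G.Adj (π h) h := (hπ h hhK).symm
    have hvp : v ≠ π h := by
      rintro hvp
      exact hb₁.hvH h (hCH₁ (hH₂C hh)) (hvp ▸ hph)
    have k1 : HasNbr G (π h) (bset β₁ β₂) :=
      pass hG hb₁ hU (hN v hvN).2 hpN.2 hUK (hN v hvN).1 hpN.1 hvp (fun h => hpv h.symm)
        ⟨h, hCH₁ (hH₂C hh), hph⟩
    refine ⟨hpN.2, k1, ?_⟩
    exact pass hG hb₂ hB₁conn ⟨t₁, ht₁, hty.symm⟩ k1 hB₁C hyC' (fun h' => hpN.1 (hCK h'))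
      (fun h' => hpN.1 (h' ▸ hb₁.sub hyH₁)) (fun h' => hpy h'.symm) ⟨h, hh, hph⟩
  -- Hence two distinct nonadjacent such parents have a common neighbour.
  have htheta : ∀ h ∈ H₂, ¬ G.Adj (π h) v → ¬ G.Adj (π h) y → ∀ h' ∈ H₂,
      ¬ G.Adj (π h') v → ¬ G.Adj (π h') y → π h ≠ π h' → ¬ G.Adj (π h) (π h') →
      ∃ c, G.Adj (π h) c ∧ G.Adj c (π h') := by
    intro h hh hv hy h' hh' hv' hy' hne hn
    obtain ⟨a1, a2, a3⟩ := hpar h hh hv hy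
    obtain ⟨b1, b2, b3⟩ := hpar h' hh' hv' hy'
    refine theta hG hU hB₁conn hB₂conn ?_ ?_ ?_ a1 a2 a3 b1 b2 b3 hne hn
    · exact fun a ha b hb => ⟨fun e => (hUK a ha).1 (e ▸ hB₁K b hb),
        (hUK a ha).2 b (hB₁K b hb)⟩
    · exact fun a ha b hb => ⟨fun e => (hUK a ha).1 (e ▸ hCK (hB₂C b hb)),
        (hUK a ha).2 b (hCK (hB₂C b hb))⟩
    · exact fun a ha b hb => ⟨fun e => (hB₁C a ha).1 (e ▸ hB₂C b hb),
        (hB₁C a ha).2 b (hB₂C b hb)⟩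
  have cv : Col G {h | h ∈ H₂ ∧ G.Adj (π h) v} 1 :=
    Col_second h3 h5 π v fun h hh => ⟨hπ h (hH₂K h hh.1), hh.2⟩
  have cy : Col G {h | h ∈ H₂ ∧ G.Adj (π h) y} 1 :=
    Col_second h3 h5 π y fun h hh => ⟨hπ h (hH₂K h hh.1), hh.2⟩
  let T : Set V := {h | h ∈ H₂ ∧ ¬ G.Adj (π h) v ∧ ¬ G.Adj (π h) y}
  -- Fix one parent `π h₁`. The vertices whose parent is, sees, or is at distance two from
  -- `π h₁` form three stable sets.
  have cT : Col G T 3 := by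
    by_cases hT : ∃ h, h ∈ T
    · obtain ⟨h₁, hh₁⟩ := hT
      have c1 : Col G {h | h ∈ T ∧ π h = π h₁} 1 := by
        refine Col_stable fun a ha b hb hab => ?_
        have ea := hπ a (hH₂K a ha.1.1)
        have eb := hπ b (hH₂K b hb.1.1)
        rw [ha.2] at ea
        rw [hb.2] at eb
        exact tri h3 hab eb ea
      have c2 : Col G {h | h ∈ T ∧ G.Adj (π h) (π h₁)} 1 :=
        Col_second h3 h5 π (π h₁) fun h hh => ⟨hπ h (hH₂K h hh.1.1), hh.2⟩
      have c3 : Col G {h | h ∈ T ∧ π h ≠ π h₁ ∧ ¬ G.Adj (π h) (π h₁)} 1 := by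
        refine Col_stable fun a ha b hb hab => ?_
        have ea := hπ a (hH₂K a ha.1.1)
        have eb := hπ b (hH₂K b hb.1.1)
        obtain ⟨c, hc, hc'⟩ := htheta a ha.1.1 ha.1.2.1 ha.1.2.2 h₁ hh₁.1 hh₁.2.1 hh₁.2.2
          ha.2.1 ha.2.2
        obtain ⟨e, he, he'⟩ := htheta b hb.1.1 hb.1.2.1 hb.1.2.2 h₁ hh₁.1 hh₁.2.1 hh₁.2.2
          hb.2.1 hb.2.2
        by_cases hπab : G.Adj (π a) (π b)
        · exact five h3 h5 hπab he he' hc'.symm hc.symm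
        · have hne : π a ≠ π b := fun h => tri h3 hab eb (h ▸ ea)
          obtain ⟨f, hf, hf'⟩ := htheta a ha.1.1 ha.1.2.1 ha.1.2.2 b hb.1.1 hb.1.2.1 hb.1.2.2
            hne hπab
          exact five h3 h5 ea hf hf' eb.symm hab.symm
      refine ((c1.union c2).union c3).mono ?_ le_rfl
      intro h hh
      by_cases e1 : π h = π h₁
      · exact Or.inl (Or.inl ⟨hh, e1⟩)
      by_cases e2 : G.Adj (π h) (π h₁)
      · exact Or.inl (Or.inr ⟨hh, e2⟩)
      · exact Or.inr ⟨hh, e1, e2⟩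
    · exact Col_empty (Set.eq_empty_iff_forall_notMem.2 fun h hh => hT ⟨h, hh⟩) _
  refine hcol₂ (((cv.union cy).union cT).mono ?_ le_rfl)
  intro h hh
  by_cases e1 : G.Adj (π h) v
  · exact Or.inl (Or.inl ⟨hh, e1⟩)
  by_cases e2 : G.Adj (π h) y
  · exact Or.inl (Or.inr ⟨hh, e2⟩)
  · exact Or.inr ⟨hh, e1, e2⟩

/-- Each distance level is coloured by `core`, with `U` the union of the levels at least two
above it and `N` the level just above it. -/
lemma Col_all (hG : NoLongEven G) (h3 : G.CliqueFree 3) (h5 : NoInducedCycle G 5) :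
    Col G Set.univ 98 := by
  by_contra hcol
  obtain ⟨v, -, hcol⟩ := exists_comp hcol
  have hconn := comp_conn (G := G) Set.univ v
  set W := comp G Set.univ v with hW
  have hvW : v ∈ W := ⟨trivial, ReflTransGen.refl⟩
  obtain ⟨d, hd0, hdv, hstep, hpar⟩ := exists_dist hconn hvW
  refine hcol ((Col_levels (n := 49) d hstep ?_).mono subset_rfl le_rfl)
  rintro (_ | _ | k)
  · refine (Col_stable ?_).mono subset_rfl (by omega : 1 ≤ 49)
    intro u hu w hw huw
    rw [hdv u hu.1 hu.2, hdv w hw.1 hw.2] at huw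
    exact huw.ne rfl
  · refine (Col_nbr h3 {u | u ∈ W ∧ d u = 0 + 1} v).mono ?_ (by omega : 1 ≤ 49)
    intro u hu
    refine ⟨hu, ?_⟩
    obtain ⟨z, hz, hzu, hdz⟩ := hpar u hu.1 0 hu.2
    rw [hdv z hz hdz] at hzu
    exact hzu
  · by_contra hlev
    obtain ⟨u, hu, hcomp⟩ := exists_comp hlev
    refine hcomp (core hG h3 h5 (U := {w | w ∈ W ∧ d w ≤ k}) (N := {w | w ∈ W ∧ d w = k + 1})
      ?_ (comp_conn _ _) ?_ ?_ ?_)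
    · have key : ∀ n, ∀ w ∈ W, d w = n → n ≤ k → Rch G {w | w ∈ W ∧ d w ≤ k} v w := by
        intro n
        induction n with
        | zero => intro w hw h _; rw [hdv w hw h]; exact ReflTransGen.refl
        | succ n ih =>
          intro w hw h hn
          obtain ⟨z, hz, hzw, hdz⟩ := hpar w hw n h
          exact (ih z hz hdz (by omega)).trans
            (Rch.single hzw ⟨hz, by omega⟩ ⟨hw, by omega⟩)
      exact fun a ha b hb => (key _ a ha.1 rfl ha.2).symm.trans (key _ b hb.1 rfl hb.2)
    · intro c hc
      refine ⟨fun h => ?_, fun h hh hch => ?_⟩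
      · have h1 := h.1.2
        have h2 := hc.2
        omega
      · have h1 := hstep c hc.1 h hh.1.1 hch
        have h2 := hh.1.2
        have h3 := hc.2
        omega
    · intro p hp
      refine ⟨fun h => ?_, ?_⟩
      · have h1 := h.1.2
        have h2 := hp.2
        omega
      · obtain ⟨z, hz, hzp, hdz⟩ := hpar p hp.1 k hp.2
        exact ⟨z, ⟨hz, hdz.le⟩, hzp.symm⟩
    · intro h hh
      obtain ⟨z, hz, hzh, hdz⟩ := hpar h hh.1.1 (k + 1) hh.1.2
      exact ⟨z, ⟨hz, hdz⟩, hzh.symm⟩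

end ChiBound

/-- There exists a constant `c'` such that every graph with no triangle,
no induced 5-cycle, and no induced cycle of even length at least 6 has chromatic number
less than `c'`. -/
theorem chi_bounded_no_triangle_no_C5_no_long_even_hole :
    ∃ c' : ℕ, ∀ (V : Type) [Fintype V] (G : SimpleGraph V),
      G.CliqueFree 3 →
      NoInducedCycle G 5 →
      (∀ n : ℕ, 6 ≤ n → Even n → NoInducedCycle G n) →
      chi G < c' := by
  refine ⟨99, fun V _ G h3 h5 hG => ?_⟩
  obtain ⟨f, hf, hf'⟩ := Col_all hG h3 h5
  have hc : G.Colorable 98 :=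
    ⟨Coloring.mk (fun v => (⟨f v, hf v trivial⟩ : Fin 98)) fun {u w} huw h =>
      hf' u trivial w trivial huw (Fin.mk.inj_iff.1 h)⟩
  have h1 := ENat.toNat_le_toNat hc.chromaticNumber_le (ENat.natCast_ne_top 98)
  rw [ENat.toNat_natCast] at h1
  exact Nat.lt_succ_of_le h1
end
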